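/- Let A = (a_{ij}), C ∈ ^cΞ with ro(A) = co(C), and suppose that C − R·E^θ_{r+1,r} is a diagonal matrix for some R ∈ ℕ. Then, as functions on X_c × X_c, e_C ∗ e_A = Σ_t q^{N(t)} · (Π_{u < r+1} [a_{r+1,u} + t_u ; t_u]_q) · (Π_{u > r+1} [a_{r+1,u} + t_u + t_{𝔫+1−u} ; t_u]_q) · (Π_{i=1}^{t_{r+1}} [a_{r+1,r+1} + 2i]_q / [i]_q) · e_{A − Σ_{u=1}^{𝔫} t_u (E^θ_{r,u} − E^θ_{r+1,u})}, where N(t) = Σ_{(j,u): j < u} a_{r+1,j} t_u + Σ_{(j,u): 𝔫+1−j < u < j} t_u t_j + Σ_{u > r+1} t_u(t_u+1)/2, and the sum is over all t = (t_1, …, t_𝔫) ∈ ℕ^𝔫 with Σ_{u=1}^{𝔫} t_u = R and t_u ≤ a_{ru} for all u. -/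

import Mathlib

open scoped Classical

noncomputable section

namespace FlagC

variable {k V : Type*} [Field k] [AddCommGroup V] [Module k V]

/-- The orthogonal complement `{v | ∀ u ∈ N, Φ u v = 0}` of a submodule with respect to a
bilinear form. -/
def perpB (Φ : V →ₗ[k] V →ₗ[k] k) (N : Submodule k V) : Submodule k V where
  carrier := {v | ∀ u ∈ N, Φ u v = 0}
  zero_mem' := fun u _ => map_zero (Φ u)
  add_mem' := fun {a b} ha hb u hu => by rw [map_add, ha u hu, hb u hu, add_zero]
  smul_mem' := fun c v hv u hu => by rw [map_smul, hv u hu, smul_zero]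

/-- A complete isotropic flag of type `C`:  `0 = L 0 ⊆ L 1 ⊆ ⋯ ⊆ L nn = V` with
`L (nn - i) = (L i)^⊥`.  (The values `L i` for `i > nn` are required to equal `⊤` so that a
flag is determined by finitely many submodules.) -/
def IsFlag (Φ : V →ₗ[k] V →ₗ[k] k) (nn : ℕ) (L : ℕ → Submodule k V) : Prop :=
  L 0 = ⊥ ∧ (∀ i, L i ≤ L (i + 1)) ∧ (∀ i, nn ≤ i → L i = ⊤) ∧
    ∀ i, i ≤ nn → L (nn - i) = perpB Φ (L i)

/-- The set `X_c` of complete isotropic flags. -/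
def Flags (Φ : V →ₗ[k] V →ₗ[k] k) (nn : ℕ) := {L : ℕ → Submodule k V // IsFlag Φ nn L}

/-- `dim_k (p / s)`, the dimension of the quotient of `p` by `s ∩ p`. -/
def relDim (p s : Submodule k V) : ℕ :=
  Module.finrank k (↥p ⧸ (s.comap p.subtype))

/-- The characteristic function `e_A` of the orbit `O_A`: the set of pairs of flags `(L, L′)`
with `dim_k (Lᵢ ∩ L′ⱼ)/(L_{i-1} ∩ L′ⱼ + Lᵢ ∩ L′_{j-1}) = A i j` for all `1 ≤ i, j ≤ nn`. -/
def eMat (Φ : V →ₗ[k] V →ₗ[k] k) (nn : ℕ) (A : ℕ → ℕ → ℤ) :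
    Flags Φ nn × Flags Φ nn → ℚ := fun LL =>
  if ∀ i ∈ Finset.Icc 1 nn, ∀ j ∈ Finset.Icc 1 nn,
      (relDim ((LL.1.1 i) ⊓ (LL.2.1 j))
        (((LL.1.1 (i - 1)) ⊓ (LL.2.1 j)) ⊔ ((LL.1.1 i) ⊓ (LL.2.1 (j - 1)))) : ℤ) = A i j
  then 1 else 0

/-- Convolution product of functions on `X_c × X_c`. -/
def conv (Φ : V →ₗ[k] V →ₗ[k] k) (nn : ℕ)
    (f g : Flags Φ nn × Flags Φ nn → ℚ) : Flags Φ nn × Flags Φ nn → ℚ :=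
  fun LL => ∑ᶠ L' : Flags Φ nn, f (LL.1, L') * g (L', LL.2)

/-- Membership in `^cΞ`: an `nn × nn` matrix of natural numbers (recorded as an
integer-valued function on `[1,nn] × [1,nn]`) with total sum `2d` and with
`a_{ij} = a_{nn+1-i, nn+1-j}`. -/
def MemXiC (nn d : ℕ) (A : ℕ → ℕ → ℤ) : Prop :=
  (∀ i ∈ Finset.Icc 1 nn, ∀ j ∈ Finset.Icc 1 nn, 0 ≤ A i j) ∧
  (∑ i ∈ Finset.Icc 1 nn, ∑ j ∈ Finset.Icc 1 nn, A i j) = 2 * d ∧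
  ∀ i ∈ Finset.Icc 1 nn, ∀ j ∈ Finset.Icc 1 nn, A i j = A (nn + 1 - i) (nn + 1 - j)

/-- Row sums. -/
def roM (nn : ℕ) (A : ℕ → ℕ → ℤ) (i : ℕ) : ℤ := ∑ j ∈ Finset.Icc 1 nn, A i j

/-- Column sums. -/
def coM (nn : ℕ) (A : ℕ → ℕ → ℤ) (j : ℕ) : ℤ := ∑ i ∈ Finset.Icc 1 nn, A i j

/-- `E^θ_{ij} = E_{ij} + E_{nn+1-i, nn+1-j}`. -/
def Eth (nn i j : ℕ) : ℕ → ℕ → ℤ := fun a b =>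
  (if a = i ∧ b = j then 1 else 0) + (if a = nn + 1 - i ∧ b = nn + 1 - j then 1 else 0)

/-- The Gaussian binomial coefficient `[m; t]_q = ∏_{i=1}^{t} (q^{m-i+1} - 1)/(q^i - 1)`. -/
def qbinom (q : ℚ) (m : ℤ) (t : ℕ) : ℚ :=
  ∏ i ∈ Finset.Icc 1 t, (q ^ (m - (i : ℤ) + 1) - 1) / (q ^ (i : ℤ) - 1)

end FlagC

open FlagC

/-- The quantum integer `[m]_q = (q^m - 1)/(q - 1)`. -/
noncomputable def qint (q : ℚ) (m : ℤ) : ℚ := (q ^ m - 1) / (q - 1)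


namespace FlagX

set_option linter.unusedSectionVars false

section LinAlg

variable {k V : Type*} [Field k] [AddCommGroup V] [Module k V] [FiniteDimensional k V]

/-- Dimension of a subspace as an integer. -/
def dm (P : Submodule k V) : ℤ := (Module.finrank k P : ℤ)

lemma dm_nonneg (P : Submodule k V) : 0 ≤ dm P := Int.natCast_nonneg _

lemma dm_mono {P Q : Submodule k V} (h : P ≤ Q) : dm P ≤ dm Q := by
  unfold dm
  exact_mod_cast Submodule.finrank_mono h

lemma eq_of_dm {P Q : Submodule k V} (h : P ≤ Q) (h2 : dm P = dm Q) : P = Q := by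
  unfold dm at h2
  exact Submodule.eq_of_le_of_finrank_eq h (by exact_mod_cast h2)

lemma dm_bot : dm (⊥ : Submodule k V) = 0 := by simp [dm]

lemma dm_sup (P Q : Submodule k V) : dm (P ⊔ Q) = dm P + dm Q - dm (P ⊓ Q) := by
  have := Submodule.finrank_sup_add_finrank_inf_eq P Q
  unfold dm
  omega

lemma relDim_eq {P Q W : Submodule k V} (hP : P ≤ W) (hQ : Q ≤ W) :
    (relDim W (P ⊔ Q) : ℤ) = dm W - dm P - dm Q + dm (P ⊓ Q) := by
  have h1 := Submodule.finrank_quotient_add_finrank ((P ⊔ Q).comap W.subtype)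
  have h2 : Module.finrank k ((P ⊔ Q).comap W.subtype) = Module.finrank k (P ⊔ Q : Submodule k V) :=
    (Submodule.comapSubtypeEquivOfLe (sup_le hP hQ)).finrank_eq
  have h3 := dm_sup P Q
  unfold dm at *
  unfold relDim
  omega

lemma card_sdiff (P Q : Submodule k V) [Fintype k] :
    (Nat.card {v : V // v ∈ P ∧ v ∉ Q} : ℚ) =
      (Fintype.card k : ℚ) ^ (dm P) - (Fintype.card k : ℚ) ^ (dm (P ⊓ Q)) := by
  have : Finite V := Module.finite_of_finite k
  have h1 : Nat.card {v : V // v ∈ P ∧ v ∉ Q} + Nat.card (P ⊓ Q : Submodule k V) = Nat.card P := by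
    have e : ({v : V | v ∈ P ∧ v ∉ Q} ∪ {v : V | v ∈ P ⊓ Q}) = {v : V | v ∈ P} := by
      ext v
      simp only [Set.mem_union, Set.mem_ofPred_eq, Submodule.mem_inf]
      tauto
    have d : Disjoint {v : V | v ∈ P ∧ v ∉ Q} {v : V | v ∈ P ⊓ Q} := by
      rw [Set.disjoint_left]
      rintro v ⟨_, h⟩ h'
      exact h (Submodule.mem_inf.1 h').2
    have := Set.ncard_union_eq d
    rw [e] at this
    exact this.symm
  rw [Module.natCard_eq_pow_finrank (K := k) (V := (P ⊓ Q : Submodule k V)),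
    Module.natCard_eq_pow_finrank (K := k) (V := P),
    Nat.card_eq_fintype_card (α := k)] at h1
  have h2 : (Nat.card {v : V // v ∈ P ∧ v ∉ Q} : ℚ) +
    (Fintype.card k : ℚ) ^ Module.finrank k (P ⊓ Q : Submodule k V) =
      (Fintype.card k : ℚ) ^ Module.finrank k P := by exact_mod_cast h1
  unfold dm
  rw [zpow_natCast, zpow_natCast]
  linarith

/-- The key modular-law computation. -/
lemma dm_modular {Mu Mu' K S : Submodule k V} (h : Mu' ≤ Mu) (hS : S ≤ K) :
    dm ((Mu ⊓ K) ⊓ (Mu' ⊔ S)) = dm (Mu' ⊓ K) + dm (S ⊓ Mu) - dm (S ⊓ Mu') := by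
  have e : (Mu ⊓ K) ⊓ (Mu' ⊔ S) = (Mu' ⊓ K) ⊔ (S ⊓ Mu) := by
    apply le_antisymm
    · rintro x ⟨⟨h1, h2⟩, h3⟩
      obtain ⟨y, hy, z, hz, rfl⟩ := Submodule.mem_sup.1 h3
      refine Submodule.mem_sup.2 ⟨y, ⟨hy, ?_⟩, z, ⟨hz, ?_⟩, rfl⟩
      · have := K.sub_mem h2 (hS hz)
        simpa using this
      · have := Mu.sub_mem h1 (h hy)
        simpa using this
    · refine sup_le (le_inf (inf_le_inf_right _ h) (inf_le_left.trans le_sup_left))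
        (le_inf (le_inf inf_le_right (inf_le_left.trans hS)) (inf_le_left.trans le_sup_right))
  have e2 : (Mu' ⊓ K) ⊓ (S ⊓ Mu) = S ⊓ Mu' := by
    apply le_antisymm
    · exact le_inf (inf_le_right.trans inf_le_left) (inf_le_left.trans inf_le_left)
    · exact le_inf (le_inf inf_le_right (inf_le_left.trans hS))
        (le_inf inf_le_left (inf_le_right.trans h))
  rw [e, dm_sup, e2]

lemma card_step {Mu Mu' K S : Submodule k V} [Fintype k] (h : Mu' ≤ Mu) (hS : S ≤ K) :
    (Nat.card {v : V // v ∈ Mu ⊓ K ∧ v ∉ Mu' ⊔ S} : ℚ) =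
      (Fintype.card k : ℚ) ^ (dm (Mu ⊓ K)) -
      (Fintype.card k : ℚ) ^ (dm (Mu' ⊓ K) + dm (S ⊓ Mu) - dm (S ⊓ Mu')) := by
  rw [card_sdiff, dm_modular h hS]

/-- adding a vector: the dimension of the intersection with a larger step. -/
lemma dm_add_vec {S T N : Submodule k V} {v : V} (hv : v ∈ T)
    (hvS : v ∉ N ⊔ S) : dm ((S ⊔ Submodule.span k {v}) ⊓ T) = dm (S ⊓ T) + 1 := by
  have hs : Submodule.span k {v} ≤ T := by
    rw [Submodule.span_singleton_le_iff_mem]; exact hv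
  have e : (S ⊔ Submodule.span k {v}) ⊓ T = (S ⊓ T) ⊔ Submodule.span k {v} := by
    rw [sup_comm, sup_inf_assoc_of_le _ hs, sup_comm]
  have e2 : (S ⊓ T) ⊓ Submodule.span k {v} = ⊥ := by
    rw [eq_bot_iff]
    rintro x ⟨⟨h1, h2⟩, h3⟩
    obtain ⟨c, rfl⟩ := Submodule.mem_span_singleton.1 h3
    by_cases hc : c = 0
    · simp [hc]
    · exfalso
      apply hvS
      have := S.smul_mem c⁻¹ h1
      rw [smul_smul, inv_mul_cancel₀ hc, one_smul] at this
      exact (le_sup_right : S ≤ N ⊔ S) this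
  have hv0 : v ≠ 0 := by
    rintro rfl
    exact hvS (Submodule.zero_mem _)
  have h1 : dm (Submodule.span k {v}) = 1 := by
    unfold dm
    rw [finrank_span_singleton hv0]; rfl
  rw [e, dm_sup, e2, h1, dm_bot]
  ring

lemma dm_add_vec' {S T N : Submodule k V} {v : V} (hTN : T ≤ N)
    (hvS : v ∉ N ⊔ S) : dm ((S ⊔ Submodule.span k {v}) ⊓ T) = dm (S ⊓ T) := by
  congr 1
  apply le_antisymm
  · rintro x ⟨h1, h2⟩
    refine ⟨?_, h2⟩
    obtain ⟨y, hy, z, hz, rfl⟩ := Submodule.mem_sup.1 h1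
    obtain ⟨c, rfl⟩ := Submodule.mem_span_singleton.1 hz
    by_cases hc : c = 0
    · simpa [hc] using hy
    · exfalso
      apply hvS
      have h3 : c • v ∈ N ⊔ S := by
        have := (N ⊔ S).sub_mem ((hTN.trans le_sup_left) h2) ((le_sup_right : S ≤ N ⊔ S) hy)
        simpa using this
      have := (N ⊔ S).smul_mem c⁻¹ h3
      rwa [smul_smul, inv_mul_cancel₀ hc, one_smul] at this
  · exact inf_le_inf_right _ le_sup_left

variable {Φ : V →ₗ[k] V →ₗ[k] k}

lemma mem_perpB {N : Submodule k V} {v : V} : v ∈ perpB Φ N ↔ ∀ u ∈ N, Φ u v = 0 := Iff.rfl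

lemma alt_symm (halt : ∀ v : V, Φ v v = 0) (u v : V) : Φ u v = - Φ v u := by
  have h := halt (u + v)
  simp only [map_add, LinearMap.add_apply, halt] at h
  simp only [zero_add, add_zero] at h
  exact eq_neg_of_add_eq_zero_right h

lemma alt_comm (halt : ∀ v : V, Φ v v = 0) (u v : V) : Φ u v = 0 ↔ Φ v u = 0 := by
  rw [alt_symm halt u v, neg_eq_zero]

lemma isRefl (halt : ∀ v : V, Φ v v = 0) : LinearMap.BilinForm.IsRefl Φ :=
  fun u v h => (alt_comm halt u v).1 h

lemma nondeg (halt : ∀ v : V, Φ v v = 0) (hnondeg : ∀ v : V, (∀ w : V, Φ v w = 0) → v = 0) :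
    LinearMap.BilinForm.Nondegenerate Φ := by
  refine ⟨fun v h => hnondeg v h, fun v h => hnondeg v fun w => ?_⟩
  exact (alt_comm halt v w).2 (h w)

lemma dm_perp (halt : ∀ v : V, Φ v v = 0) (hnondeg : ∀ v : V, (∀ w : V, Φ v w = 0) → v = 0)
    (N : Submodule k V) : dm (perpB Φ N) = Module.finrank k V - dm N := by
  have h : perpB Φ N = LinearMap.BilinForm.orthogonal Φ N := rfl
  have h2 := LinearMap.BilinForm.finrank_orthogonal (nondeg halt hnondeg) N
  have h3 := Submodule.finrank_le N
  unfold dm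
  rw [h, h2]
  omega

lemma perp_perp (halt : ∀ v : V, Φ v v = 0) (hnondeg : ∀ v : V, (∀ w : V, Φ v w = 0) → v = 0)
    (N : Submodule k V) : perpB Φ (perpB Φ N) = N :=
  LinearMap.BilinForm.orthogonal_orthogonal (nondeg halt hnondeg) (isRefl halt) N

lemma perp_anti {P Q : Submodule k V} (h : P ≤ Q) : perpB Φ Q ≤ perpB Φ P :=
  fun _ hv u hu => hv u (h hu)

lemma perp_sup (P Q : Submodule k V) : perpB Φ (P ⊔ Q) = perpB Φ P ⊓ perpB Φ Q := by
  apply le_antisymm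
  · exact le_inf (perp_anti le_sup_left) (perp_anti le_sup_right)
  · rintro v ⟨h1, h2⟩ u hu
    obtain ⟨y, hy, z, hz, rfl⟩ := Submodule.mem_sup.1 hu
    rw [map_add, LinearMap.add_apply, h1 y hy, h2 z hz, add_zero]

/-- dimension of `P^⊥ ∩ N^⊥`. -/
lemma dm_perp_inf (halt : ∀ v : V, Φ v v = 0)
    (hnondeg : ∀ v : V, (∀ w : V, Φ v w = 0) → v = 0) (P N : Submodule k V) :
    dm (perpB Φ P ⊓ perpB Φ N) = dm (perpB Φ N) - dm P + dm (P ⊓ N) := by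
  rw [← perp_sup, dm_perp halt hnondeg, dm_perp halt hnondeg, dm_sup]
  ring

lemma iso_add_vec (halt : ∀ v : V, Φ v v = 0) {S : Submodule k V} {v : V}
    (hS : S ≤ perpB Φ S) (hv : v ∈ perpB Φ S) :
    S ⊔ Submodule.span k {v} ≤ perpB Φ (S ⊔ Submodule.span k {v}) := by
  rw [perp_sup]
  have h1 : Submodule.span k {v} ≤ perpB Φ S := by
    rw [Submodule.span_singleton_le_iff_mem]; exact hv
  refine le_inf (sup_le hS h1) (sup_le ?_ ?_)
  · intro x hx u hu
    exact (alt_comm halt _ _).1 (h1 hu x hx)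
  · rw [Submodule.span_singleton_le_iff_mem]
    intro u hu
    obtain ⟨c, rfl⟩ := Submodule.mem_span_singleton.1 hu
    simp [halt]

end LinAlg

section Count

variable {k V : Type*} [Field k] [Fintype k] [AddCommGroup V] [Module k V]
  [FiniteDimensional k V] [Fintype (Submodule k V)]

/-- Weighted count of the ways to build `U` from `S0` by adding vectors at the levels in the
list. -/
def W (Φ : V →ₗ[k] V →ₗ[k] k) (M : ℕ → Submodule k V) (S0 : Submodule k V) :
    List ℕ → Submodule k V → ℚ
  | [] => fun U => if U = S0 then 1 else 0
  | u :: us => fun U => ∑ S : Submodule k V, W Φ M S0 us S *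
      (Nat.card {v : V // v ∈ M u ∧ v ∈ perpB Φ S ∧ v ∉ M (u - 1) ⊔ S ∧
        S ⊔ Submodule.span k {v} = U} : ℚ)

/-- number of levels at most `j` in the list -/
def ct (us : List ℕ) (j : ℕ) : ℤ := (us.countP (fun u => decide (u ≤ j)) : ℤ)

lemma ct_nil (j : ℕ) : ct [] j = 0 := rfl

lemma ct_cons (u : ℕ) (us : List ℕ) (j : ℕ) :
    ct (u :: us) j = ct us j + if u ≤ j then 1 else 0 := by
  unfold ct
  rw [List.countP_cons]
  simp

variable {Φ : V →ₗ[k] V →ₗ[k] k} {M : ℕ → Submodule k V} {S0 : Submodule k V}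

lemma W_inv (halt : ∀ v : V, Φ v v = 0) (hM : Monotone M) (hS0 : S0 ≤ perpB Φ S0)
    (us : List ℕ) : ∀ S : Submodule k V, W Φ M S0 us S ≠ 0 →
      S0 ≤ S ∧ S ≤ perpB Φ S ∧ ∀ j, dm (S ⊓ M j) = dm (S0 ⊓ M j) + ct us j := by
  induction us with
  | nil =>
    intro S hS
    simp only [W, ne_eq, ite_eq_right_iff, one_ne_zero, imp_false, not_not] at hS
    subst hS
    exact ⟨le_rfl, hS0, fun j => by rw [ct_nil, add_zero]⟩
  | cons u us ih =>
    intro U hU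
    simp only [W] at hU
    obtain ⟨S, -, hS⟩ := Finset.exists_ne_zero_of_sum_ne_zero hU
    have h1 := left_ne_zero_of_mul hS
    have h2 := right_ne_zero_of_mul hS
    obtain ⟨i1, i2, i3⟩ := ih S h1
    have h3 : Nat.card {v : V // v ∈ M u ∧ v ∈ perpB Φ S ∧ v ∉ M (u - 1) ⊔ S ∧
        S ⊔ Submodule.span k {v} = U} ≠ 0 := by exact_mod_cast h2
    obtain ⟨⟨v, v1, v2, v3, rfl⟩⟩ := (Nat.card_ne_zero.1 h3).1
    refine ⟨i1.trans le_sup_left, iso_add_vec halt i2 v2, fun j => ?_⟩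
    rw [ct_cons]
    by_cases hj : u ≤ j
    · rw [dm_add_vec (hM hj v1) v3, i3 j, if_pos hj]
      ring
    · rw [dm_add_vec' (hM (by omega)) v3, i3 j, if_neg hj]
      ring

/-- total count below `U` -/
def Z (Φ : V →ₗ[k] V →ₗ[k] k) (M : ℕ → Submodule k V) (S0 : Submodule k V)
    (U : Submodule k V) (us : List ℕ) : ℚ :=
  ∑ S : Submodule k V, if S ≤ U then W Φ M S0 us S else 0

lemma Z_nil {U : Submodule k V} (h : S0 ≤ U) : Z Φ M S0 U [] = 1 := by
  unfold Z
  rw [Finset.sum_eq_single S0]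
  · simp [W, h]
  · intro b _ hb
    simp [W, hb]
  · simp

lemma Z_cons (U : Submodule k V) (u : ℕ) (us : List ℕ) (c : ℚ)
    (hc : ∀ S, S ≤ U → W Φ M S0 us S ≠ 0 →
      (Nat.card {v : V // v ∈ M u ∧ v ∈ perpB Φ S ∧ v ∉ M (u - 1) ⊔ S ∧ v ∈ U} : ℚ) = c) :
    Z Φ M S0 U (u :: us) = Z Φ M S0 U us * c := by
  have : Finite V := Module.finite_of_finite k
  have key : ∀ S : Submodule k V,
      (∑ U' : Submodule k V, if U' ≤ U then (Nat.card {v : V // v ∈ M u ∧ v ∈ perpB Φ S ∧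
        v ∉ M (u - 1) ⊔ S ∧ S ⊔ Submodule.span k {v} = U'} : ℚ) else 0) =
      if S ≤ U then
        (Nat.card {v : V // v ∈ M u ∧ v ∈ perpB Φ S ∧ v ∉ M (u - 1) ⊔ S ∧ v ∈ U} : ℚ) else 0 := by
    intro S
    have : Fintype V := Fintype.ofFinite V
    simp only [Nat.card_eq_fintype_card, Fintype.card_subtype, Finset.card_filter]
    push_cast
    have e1 : ∀ U' : Submodule k V, (if U' ≤ U then (∑ v : V, if v ∈ M u ∧ v ∈ perpB Φ S ∧
        v ∉ M (u - 1) ⊔ S ∧ S ⊔ Submodule.span k {v} = U' then (1 : ℚ) else 0) else 0) =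
        ∑ v : V, if (v ∈ M u ∧ v ∈ perpB Φ S ∧ v ∉ M (u - 1) ⊔ S ∧
          S ⊔ Submodule.span k {v} ≤ U) ∧ S ⊔ Submodule.span k {v} = U' then (1 : ℚ) else 0 := by
      intro U'
      by_cases h : U' ≤ U
      · rw [if_pos h]
        refine Finset.sum_congr rfl fun v _ => if_congr ?_ rfl rfl
        constructor
        · rintro ⟨a, b, c, rfl⟩; exact ⟨⟨a, b, c, h⟩, rfl⟩
        · rintro ⟨⟨a, b, c, _⟩, e⟩; exact ⟨a, b, c, e⟩
      · rw [if_neg h]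
        refine (Finset.sum_eq_zero fun v _ => if_neg ?_).symm
        rintro ⟨⟨a, b, c, d⟩, e⟩
        exact h (e ▸ d)
    rw [Finset.sum_congr rfl fun U' _ => e1 U', Finset.sum_comm]
    have e2 : ∀ v : V, (∑ U' : Submodule k V, if (v ∈ M u ∧ v ∈ perpB Φ S ∧ v ∉ M (u - 1) ⊔ S ∧
          S ⊔ Submodule.span k {v} ≤ U) ∧ S ⊔ Submodule.span k {v} = U' then (1 : ℚ) else 0) =
        if (v ∈ M u ∧ v ∈ perpB Φ S ∧ v ∉ M (u - 1) ⊔ S ∧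
          S ⊔ Submodule.span k {v} ≤ U) then 1 else 0 := by
      intro v
      simp only [ite_and (v ∈ M u ∧ _), Finset.sum_ite_irrel]
      simp
    rw [Finset.sum_congr rfl fun v _ => e2 v]
    by_cases h : S ≤ U
    · rw [if_pos h]
      refine Finset.sum_congr rfl fun v _ => if_congr ?_ rfl rfl
      rw [sup_le_iff, Submodule.span_singleton_le_iff_mem]
      tauto
    · rw [if_neg h]
      refine Finset.sum_eq_zero fun v _ => if_neg ?_
      rintro ⟨_, _, _, d⟩
      exact h (le_sup_left.trans d)
  unfold Z
  simp only [W]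
  have e3 : ∀ U' : Submodule k V, (if U' ≤ U then (∑ S : Submodule k V, W Φ M S0 us S *
      (Nat.card {v : V // v ∈ M u ∧ v ∈ perpB Φ S ∧ v ∉ M (u - 1) ⊔ S ∧
        S ⊔ Submodule.span k {v} = U'} : ℚ)) else 0) =
      ∑ S : Submodule k V, W Φ M S0 us S * (if U' ≤ U then
      (Nat.card {v : V // v ∈ M u ∧ v ∈ perpB Φ S ∧ v ∉ M (u - 1) ⊔ S ∧
        S ⊔ Submodule.span k {v} = U'} : ℚ) else 0) := by
    intro U'
    by_cases h : U' ≤ U <;> simp [h]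
  rw [Finset.sum_congr rfl fun U' _ => e3 U', Finset.sum_comm, Finset.sum_mul]
  refine Finset.sum_congr rfl fun S _ => ?_
  rw [← Finset.mul_sum, key]
  by_cases h : S ≤ U
  · rw [if_pos h, if_pos h]
    by_cases h0 : W Φ M S0 us S = 0
    · rw [h0, zero_mul, zero_mul]
    · rw [hc S h h0]
  · rw [if_neg h, if_neg h]
    ring

/-- product of step counts -/
def cnt (c : ℕ → List ℕ → ℚ) : List ℕ → ℚ
  | [] => 1
  | u :: us => cnt c us * c u us

/-- step count for arbitrary isotropic extension -/
def cTop (q : ℚ) (n : ℕ) (f D : ℕ → ℤ) (u : ℕ) (us : List ℕ) : ℚ :=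
  q ^ (f u - (D n + ct us n) + (D (n - u) + ct us (n - u))) -
    q ^ (f (u - 1) - (D n + ct us n) + (D (n - (u - 1)) + ct us (n - (u - 1))) +
      (D u + ct us u) - (D (u - 1) + ct us (u - 1)))

/-- step count inside a given space -/
def cIn (q : ℚ) (D E : ℕ → ℤ) (u : ℕ) (us : List ℕ) : ℚ :=
  q ^ (E u) - q ^ (E (u - 1) + (D u + ct us u) - (D (u - 1) + ct us (u - 1)))

lemma Z_top (halt : ∀ v : V, Φ v v = 0) (hnondeg : ∀ v : V, (∀ w : V, Φ v w = 0) → v = 0)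
    (hM : Monotone M) (hS0 : S0 ≤ perpB Φ S0) (n : ℕ) (hn : M n = ⊤)
    (hperp : ∀ i, i ≤ n → M (n - i) = perpB Φ (M i))
    (us : List ℕ) (hus : ∀ u ∈ us, u ≤ n) :
    Z Φ M S0 ⊤ us =
      cnt (cTop (Fintype.card k : ℚ) n (fun j => dm (M j)) (fun j => dm (S0 ⊓ M j))) us := by
  induction us with
  | nil => rw [Z_nil le_top]; rfl
  | cons u us ih =>
    have hu : u ≤ n := hus u (by simp)
    rw [cnt, ← ih (fun x hx => hus x (by simp [hx]))]
    apply Z_cons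
    intro S _ hS
    obtain ⟨i1, i2, i3⟩ := W_inv halt hM hS0 us S hS
    have hp : ∀ j, j ≤ n → dm (M j ⊓ perpB Φ S) = dm (M j) - dm (S ⊓ M n) + dm (S ⊓ M (n - j)) := by
      intro j hj
      have := hperp (n - j) (by omega)
      rw [show n - (n - j) = j by omega] at this
      rw [this, inf_comm, dm_perp_inf halt hnondeg, hn, inf_top_eq]
    have e : {v : V // v ∈ M u ∧ v ∈ perpB Φ S ∧ v ∉ M (u - 1) ⊔ S ∧ v ∈ (⊤ : Submodule k V)} =
        {v : V // v ∈ M u ⊓ perpB Φ S ∧ v ∉ M (u - 1) ⊔ S} := by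
      congr 1; ext v; simp [Submodule.mem_inf, and_assoc]
    rw [e, card_step (hM (Nat.sub_le u 1)) i2, hp u hu, hp (u - 1) (by omega)]
    simp only [i3, cTop]

lemma Z_in (halt : ∀ v : V, Φ v v = 0)
    (hM : Monotone M) (hS0 : S0 ≤ perpB Φ S0) (U : Submodule k V)
    (hU : U ≤ perpB Φ U) (hU0 : S0 ≤ U)
    (us : List ℕ) :
    Z Φ M S0 U us =
      cnt (cIn (Fintype.card k : ℚ) (fun j => dm (S0 ⊓ M j)) (fun j => dm (U ⊓ M j))) us := by
  induction us with
  | nil => rw [Z_nil hU0]; rfl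
  | cons u us ih =>
    rw [cnt, ← ih]
    apply Z_cons
    intro S hSU hS
    obtain ⟨i1, i2, i3⟩ := W_inv halt hM hS0 us S hS
    have e : {v : V // v ∈ M u ∧ v ∈ perpB Φ S ∧ v ∉ M (u - 1) ⊔ S ∧ v ∈ U} =
        {v : V // v ∈ M u ⊓ U ∧ v ∉ M (u - 1) ⊔ S} := by
      congr 1; ext v
      have : v ∈ U → v ∈ perpB Φ S := fun h => perp_anti hSU (hU h)
      simp only [Submodule.mem_inf]
      tauto
    rw [e, card_step (hM (Nat.sub_le u 1)) hSU, inf_comm (M u), inf_comm (M (u - 1))]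
    simp only [i3, cIn]

/-- The count of isotropic subspaces with prescribed intersections. -/
lemma count_target (halt : ∀ v : V, Φ v v = 0)
    (hnondeg : ∀ v : V, (∀ w : V, Φ v w = 0) → v = 0)
    (hM : Monotone M) (hS0 : S0 ≤ perpB Φ S0) (n : ℕ) (hn : M n = ⊤)
    (hperp : ∀ i, i ≤ n → M (n - i) = perpB Φ (M i))
    (us : List ℕ) (hus : ∀ u ∈ us, u ≤ n) (E : ℕ → ℤ)
    (hE : ∀ j, E j = dm (S0 ⊓ M j) + ct us j) :
    cnt (cTop (Fintype.card k : ℚ) n (fun j => dm (M j)) (fun j => dm (S0 ⊓ M j))) us =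
      (Nat.card {U : Submodule k V // S0 ≤ U ∧ U ≤ perpB Φ U ∧ ∀ j, dm (U ⊓ M j) = E j} : ℚ) *
      cnt (cIn (Fintype.card k : ℚ) (fun j => dm (S0 ⊓ M j)) E) us := by
  rw [← Z_top halt hnondeg hM hS0 n hn hperp us hus, Nat.card_eq_fintype_card,
    Fintype.card_subtype, Finset.card_filter]
  push_cast
  rw [Finset.sum_mul]
  unfold Z
  refine Finset.sum_congr rfl fun U _ => ?_
  rw [if_pos le_top]
  by_cases h : S0 ≤ U ∧ U ≤ perpB Φ U ∧ ∀ j, dm (U ⊓ M j) = E j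
  · rw [if_pos h, one_mul]
    obtain ⟨h1, h2, h3⟩ := h
    have hE' : E = fun j => dm (U ⊓ M j) := by ext j; rw [h3]
    rw [hE', ← Z_in halt hM hS0 U h2 h1]
    unfold Z
    rw [Finset.sum_eq_single U]
    · rw [if_pos le_rfl]
    · intro S _ hSU
      by_cases hle : S ≤ U
      · rw [if_pos hle]
        by_contra hne
        obtain ⟨i1, i2, i3⟩ := W_inv halt hM hS0 us S hne
        have := i3 n
        rw [← hE n, ← h3 n, hn, inf_top_eq, inf_top_eq] at this
        exact hSU (eq_of_dm hle this)
      · rw [if_neg hle]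
    · simp
  · rw [if_neg h, zero_mul]
    by_contra hne
    obtain ⟨i1, i2, i3⟩ := W_inv halt hM hS0 us U hne
    exact h ⟨i1, i2, fun j => by rw [i3, hE]⟩

end Count

section Numeric

/-- list of levels, with multiplicities `t`, from the top -/
def lev (n : ℕ) (t : ℕ → ℕ) : ℕ → List ℕ
  | 0 => []
  | w + 1 => List.replicate (t (n - w)) (n - w) ++ lev n t w

/-- prefix sums of `t` -/
def Tp (t : ℕ → ℕ) (j : ℕ) : ℤ := ∑ x ∈ Finset.Icc 1 j, (t x : ℤ)

lemma Tp_zero (t : ℕ → ℕ) : Tp t 0 = 0 := by simp [Tp]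

lemma Tp_succ (t : ℕ → ℕ) (j : ℕ) : Tp t (j + 1) = Tp t j + t (j + 1) := by
  unfold Tp
  rw [Finset.sum_Icc_succ_top (by omega)]

lemma ct_replicate_append (i u : ℕ) (us : List ℕ) (j : ℕ) :
    ct (List.replicate i u ++ us) j = (if u ≤ j then (i : ℤ) else 0) + ct us j := by
  induction i with
  | zero => simp
  | succ i ih =>
    rw [List.replicate_succ, List.cons_append, ct_cons, ih]
    by_cases h : u ≤ j <;> simp [h]; ring

lemma cnt_replicate_append (c : ℕ → List ℕ → ℚ) (m u : ℕ) (us : List ℕ) :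
    cnt c (List.replicate m u ++ us) =
      cnt c us * ∏ i ∈ Finset.range m, c u (List.replicate i u ++ us) := by
  induction m with
  | zero => simp
  | succ m ih =>
    rw [List.replicate_succ, List.cons_append, cnt, ih, Finset.prod_range_succ]
    ring

lemma Tp_const (n : ℕ) (t : ℕ → ℕ) (ht : ∀ x, n < x → t x = 0) (j : ℕ) :
    Tp t (n + j) = Tp t n := by
  induction j with
  | zero => rfl
  | succ j ih => rw [← add_assoc, Tp_succ, ih, ht _ (by omega)]; simp

lemma ct_lev (n : ℕ) (t : ℕ → ℕ) (ht : ∀ x, n < x → t x = 0) (w : ℕ) (hw : w ≤ n) (j : ℕ) :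
    ct (lev n t w) j = if n - w ≤ j then Tp t j - Tp t (n - w) else 0 := by
  induction w with
  | zero =>
    rw [lev, ct_nil]
    split_ifs with h
    · obtain ⟨e, rfl⟩ := Nat.exists_eq_add_of_le h
      rw [Nat.sub_zero, Tp_const n t ht, sub_self]
    · rfl
  | succ w ih =>
    rw [lev, ct_replicate_append, ih (by omega)]
    obtain ⟨u, hu⟩ : ∃ u, n - w = u + 1 := ⟨n - w - 1, by omega⟩
    have hu' : n - (w + 1) = u := by omega
    rw [hu, hu']
    have := Tp_succ t u
    by_cases h1 : u + 1 ≤ j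
    · rw [if_pos h1, if_pos h1, if_pos (by omega)]
      omega
    · rw [if_neg h1, if_neg h1]
      split_ifs with h2
      · have : j = u := by omega
        rw [this]; ring
      · rfl

lemma mem_lev (n : ℕ) (t : ℕ → ℕ) (w : ℕ) (x : ℕ) (hx : x ∈ lev n t w) : x ≤ n := by
  induction w with
  | zero => simp [lev] at hx
  | succ w ih =>
    rw [lev, List.mem_append] at hx
    rcases hx with h | h
    · have := (List.mem_replicate.1 h).2
      omega
    · exact ih h

lemma zpow_key (q : ℚ) (hq : 1 < q) (X Y P Q G m s : ℤ) (hs : 0 < s) (h1 : X = Y + m)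
    (h2 : P = Q + s) (h3 : Y = Q + G) :
    q ^ X - q ^ Y = (q ^ P - q ^ Q) * (q ^ G * ((q ^ m - 1) / (q ^ s - 1))) := by
  have h0 : q ≠ 0 := by linarith
  have hne : q ^ s - 1 ≠ 0 := by
    have := one_lt_zpow₀ hq hs
    linarith
  subst h1 h2 h3
  rw [zpow_add₀ h0 (Q + G) m, zpow_add₀ h0 Q G, zpow_add₀ h0 Q s]
  field_simp
  try ring

lemma prod_zpow_sum (q : ℚ) (hq : q ≠ 0) {ι : Type*} (s : Finset ι) (e : ι → ℤ) :
    ∏ i ∈ s, q ^ (e i) = q ^ (∑ i ∈ s, e i) := by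
  induction s using Finset.induction_on with
  | empty => simp
  | insert a s ha ih => rw [Finset.prod_insert ha, Finset.sum_insert ha, ih, zpow_add₀ hq]

lemma prod_Icc_range (m : ℕ) (F : ℕ → ℚ) :
    ∏ i ∈ Finset.Icc 1 m, F i = ∏ i ∈ Finset.range m, F (i + 1) := by
  induction m with
  | zero => simp
  | succ m ih => rw [Finset.prod_Icc_succ_top (by omega), ih, Finset.prod_range_succ]

lemma prod_den (m : ℕ) (F : ℤ → ℚ) :
    ∏ i ∈ Finset.range m, F ((m : ℤ) - i) = ∏ i ∈ Finset.Icc 1 m, F (i : ℤ) := by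
  rw [prod_Icc_range, ← Finset.prod_range_reflect]
  refine Finset.prod_congr rfl fun i hi => ?_
  have := Finset.mem_range.1 hi
  congr 1
  omega

lemma prod_qbinom (q : ℚ) (m : ℤ) (t : ℕ) :
    ∏ i ∈ Finset.range t, ((q ^ (m - i) - 1) / (q ^ ((t : ℤ) - i) - 1)) = qbinom q m t := by
  unfold qbinom
  rw [Finset.prod_div_distrib, Finset.prod_div_distrib, prod_den t (fun z => q ^ z - 1),
    prod_Icc_range t (fun i => q ^ (m - (i : ℤ) + 1) - 1)]
  congr 1
  refine Finset.prod_congr rfl fun i _ => ?_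
  congr 2
  push_cast
  ring

lemma prod_mid (q : ℚ) (hq : 1 < q) (a : ℤ) (t : ℕ) :
    ∏ i ∈ Finset.range t, ((q ^ (a + 2 * ((t : ℤ) - i)) - 1) / (q ^ ((t : ℤ) - i) - 1)) =
      ∏ i ∈ Finset.Icc 1 t, qint q (a + 2 * (i : ℤ)) / qint q (i : ℤ) := by
  rw [prod_den t (fun z => (q ^ (a + 2 * z) - 1) / (q ^ z - 1))]
  refine Finset.prod_congr rfl fun i _ => ?_
  unfold qint
  have : q - 1 ≠ 0 := by linarith
  rw [div_div_div_cancel_right₀ this]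

lemma sum_tri (z : ℤ) (t : ℕ) :
    ∑ i ∈ Finset.range t, (z + t - (i : ℤ)) = t * z + (t : ℤ) * ((t : ℤ) + 1) / 2 := by
  have h : ∀ m : ℕ, 2 * ∑ i ∈ Finset.range m, (z + t - (i : ℤ)) =
      2 * m * (z + t) - (m : ℤ) * (m - 1) := by
    intro m
    induction m with
    | zero => simp
    | succ m ih => rw [Finset.sum_range_succ, mul_add, ih]; push_cast; ring
  have h2 : (t : ℤ) * ((t : ℤ) + 1) / 2 = ∑ i ∈ Finset.range t, (z + t - (i : ℤ)) - t * z := by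
    apply Int.ediv_eq_of_eq_mul_right (by norm_num)
    rw [mul_sub, h t]
    ring
  rw [h2]
  ring

/-- the `q`-power exponent of the block `u` -/
def Nu (r : ℕ) (a : ℕ → ℤ) (t : ℕ → ℕ) (u : ℕ) : ℤ :=
  (∑ j ∈ Finset.Icc 1 (2 * r + 1), if j < u then a j * (t u : ℤ) else 0) +
  (∑ x ∈ Finset.Icc 1 (2 * r + 1),
    if (2 * r + 2 - u < x ∧ x < u) then (t x : ℤ) * (t u : ℤ) else 0) +
  (if r + 1 < u then (t u : ℤ) * ((t u : ℤ) + 1) / 2 else 0)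

/-- the remaining factor of the block `u` -/
def Gu (q : ℚ) (r : ℕ) (a : ℕ → ℤ) (t : ℕ → ℕ) (u : ℕ) : ℚ :=
  if u < r + 1 then qbinom q (a u + (t u : ℤ)) (t u)
  else if u = r + 1 then
    ∏ i ∈ Finset.Icc 1 (t u), qint q (a u + 2 * (i : ℤ)) / qint q (i : ℤ)
  else qbinom q (a u + (t u : ℤ) + (t (2 * r + 2 - u) : ℤ)) (t u)

lemma sum_lt (n : ℕ) (g : ℕ → ℤ) (u : ℕ) (hu : u ≤ n) :
    (∑ j ∈ Finset.Icc 1 n, if j < u + 1 then g j else 0) = ∑ j ∈ Finset.Icc 1 u, g j := by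
  rw [← Finset.sum_filter]
  refine Finset.sum_congr ?_ fun _ _ => rfl
  ext x
  simp only [Finset.mem_filter, Finset.mem_Icc]
  omega

lemma sum_between (n : ℕ) (t : ℕ → ℕ) (b u : ℕ) (hb : b ≤ u) (hu : u ≤ n) :
    (∑ x ∈ Finset.Icc 1 n, if (b < x ∧ x < u + 1) then (t x : ℤ) else 0) = Tp t u - Tp t b := by
  have h1 := sum_lt n (fun x => (t x : ℤ)) u hu
  have h2 := sum_lt n (fun x => (t x : ℤ)) b (by omega)
  unfold Tp
  rw [← h1, ← h2, ← Finset.sum_sub_distrib]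
  refine Finset.sum_congr rfl fun x _ => ?_
  by_cases h : x < b + 1
  · rw [if_neg (by omega), if_pos (by omega), if_pos h, sub_self]
  · by_cases h' : x < u + 1
    · rw [if_pos (by omega), if_pos h', if_neg h, sub_zero]
    · rw [if_neg (by omega), if_neg h', if_neg h, sub_zero]

lemma sum_a (n : ℕ) (f D a : ℕ → ℤ) (t : ℕ → ℕ) (f0 : f 0 = 0) (D0 : D 0 = 0)
    (hb : ∀ u ∈ Finset.Icc 1 n, a u + t u + t (n + 1 - u) =
      (f u - f (u - 1)) + (D (n - u) - D (n - (u - 1))) - (D u - D (u - 1)))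
    (u : ℕ) (hu : u ≤ n) :
    ∑ j ∈ Finset.Icc 1 u, a j = f u - (D n - D (n - u)) - D u - Tp t u -
      (Tp t n - Tp t (n - u)) := by
  induction u with
  | zero => simp [f0, D0, Tp_zero]
  | succ u ih =>
    rw [Finset.sum_Icc_succ_top (by omega), ih (by omega)]
    have h1 := hb (u + 1) (Finset.mem_Icc.2 ⟨by omega, hu⟩)
    rw [Nat.add_sub_cancel] at h1
    obtain ⟨x, hx⟩ : ∃ x, n - u = x + 1 := ⟨n - u - 1, by omega⟩
    have hx' : n - (u + 1) = x := by omega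
    have hx2 : n + 1 - (u + 1) = x + 1 := by omega
    rw [hx2, hx', hx] at h1
    rw [hx', hx, Tp_succ, Tp_succ]
    linarith

set_option maxHeartbeats 1000000 in
lemma block (q : ℚ) (hq : 1 < q) (r : ℕ) (f D a E : ℕ → ℤ) (t : ℕ → ℕ)
    (ht : ∀ x, 2 * r + 1 < x → t x = 0)
    (f0 : f 0 = 0) (D0 : D 0 = 0)
    (hb : ∀ u ∈ Finset.Icc 1 (2 * r + 1), a u + t u + t (2 * r + 1 + 1 - u) =
      (f u - f (u - 1)) + (D (2 * r + 1 - u) - D (2 * r + 1 - (u - 1))) - (D u - D (u - 1)))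
    (hE : ∀ j, E j = D j + Tp t j) (w : ℕ) (hw : w < 2 * r + 1) :
    ∏ i ∈ Finset.range (t (2 * r + 1 - w)), cTop q (2 * r + 1) f D (2 * r + 1 - w)
        (List.replicate i (2 * r + 1 - w) ++ lev (2 * r + 1) t w) =
    (∏ i ∈ Finset.range (t (2 * r + 1 - w)), cIn q D E (2 * r + 1 - w)
        (List.replicate i (2 * r + 1 - w) ++ lev (2 * r + 1) t w)) *
      (q ^ (Nu r a t (2 * r + 1 - w)) * Gu q r a t (2 * r + 1 - w)) := by
  have hq0 : q ≠ 0 := by linarith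
  set n := 2 * r + 1 with hn
  obtain ⟨u, hu⟩ : ∃ u, n - w = u + 1 := ⟨n - w - 1, by omega⟩
  rw [hu]
  have hun : u + 1 ≤ n := by omega
  have hct : ∀ i j, ct (List.replicate i (u + 1) ++ lev n t w) j =
      if u + 1 ≤ j then (i : ℤ) + (Tp t j - Tp t (u + 1)) else 0 := by
    intro i j
    rw [ct_replicate_append, ct_lev n t ht w (by omega), hu]
    split_ifs <;> simp
  have hal := sum_a n f D a t f0 D0 hb u (by omega)
  have hbu := hb (u + 1) (Finset.mem_Icc.2 ⟨by omega, hun⟩)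
  rw [Nat.add_sub_cancel] at hbu
  set al := ∑ j ∈ Finset.Icc 1 u, a j with hal'
  have hT1 := Tp_succ t u
  obtain ⟨y, hy⟩ : ∃ y, n - u = y + 1 := ⟨n - u - 1, by omega⟩
  have hy1 : n - (u + 1) = y := by omega
  have hy2 : n + 1 - (u + 1) = y + 1 := by omega
  have hT2 := Tp_succ t y
  rw [hy1, hy2, hy] at hbu
  rw [hy] at hal
  have hE1 := hE (u + 1)
  have hE2 := hE u
  -- the exponents
  have hN1 : (∑ j ∈ Finset.Icc 1 n, if j < u + 1 then a j * (t (u + 1) : ℤ) else 0) =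
      t (u + 1) * al := by
    rw [sum_lt n (fun j => a j * (t (u + 1) : ℤ)) u (by omega), ← Finset.sum_mul, mul_comm]
  have hN2 : (∑ x ∈ Finset.Icc 1 n,
      if (2 * r + 2 - (u + 1) < x ∧ x < u + 1) then (t x : ℤ) * (t (u + 1) : ℤ) else 0) =
      if r + 1 < u + 1 then t (u + 1) * (Tp t u - Tp t (y + 1)) else 0 := by
    split_ifs with h
    · rw [← sum_between n t (y + 1) u (by omega) (by omega), Finset.mul_sum]
      refine Finset.sum_congr rfl fun x _ => ?_
      have : 2 * r + 2 - (u + 1) = y + 1 := by omega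
      rw [this]
      split_ifs <;> ring
    · refine Finset.sum_eq_zero fun x _ => if_neg ?_
      omega
  have hNu : Nu r a t (u + 1) = t (u + 1) * al +
      (if r + 1 < u + 1 then t (u + 1) * (Tp t u - Tp t (y + 1)) +
        (t (u + 1) : ℤ) * ((t (u + 1) : ℤ) + 1) / 2 else 0) := by
    unfold Nu
    rw [← hn, hN1, hN2]
    split_ifs <;> ring
  rw [hNu]
  unfold Gu
  -- three cases
  rcases lt_trichotomy (u + 1) (r + 1) with hc | hc | hc
  · rw [if_neg (by omega), if_pos hc, add_zero, ← prod_qbinom]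
    have e1 : q ^ ((t (u + 1) : ℤ) * al) = ∏ i ∈ Finset.range (t (u + 1)), q ^ al := by
      rw [Finset.prod_const, Finset.card_range, mul_comm, zpow_mul, zpow_natCast]
    rw [e1, ← Finset.prod_mul_distrib, ← Finset.prod_mul_distrib]
    refine Finset.prod_congr rfl fun i hi => ?_
    have hi' := Finset.mem_range.1 hi
    unfold cTop cIn
    rw [Nat.add_sub_cancel, hy, hy1]
    simp only [hct]
    rw [if_pos (show u + 1 ≤ n by omega), if_pos (show u + 1 ≤ y by omega),
      if_pos (show u + 1 ≤ y + 1 by omega), if_pos le_rfl, if_neg (show ¬ u + 1 ≤ u by omega)]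
    apply zpow_key q hq <;> linarith [(by exact_mod_cast hi' : (i : ℤ) < t (u + 1))]
  · have hyu : y = u := by omega
    rw [if_neg (by omega), if_neg (by omega), if_pos hc, add_zero, ← prod_mid q hq]
    have e1 : q ^ ((t (u + 1) : ℤ) * al) = ∏ i ∈ Finset.range (t (u + 1)), q ^ al := by
      rw [Finset.prod_const, Finset.card_range, mul_comm, zpow_mul, zpow_natCast]
    rw [e1, ← Finset.prod_mul_distrib, ← Finset.prod_mul_distrib]
    refine Finset.prod_congr rfl fun i hi => ?_
    have hi' := Finset.mem_range.1 hi
    unfold cTop cIn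
    rw [Nat.add_sub_cancel, hy, hy1]
    simp only [hct]
    subst hyu
    rw [if_pos (show y + 1 ≤ n by omega), if_neg (show ¬ y + 1 ≤ y by omega),
      if_pos le_rfl]
    apply zpow_key q hq <;> linarith [(by exact_mod_cast hi' : (i : ℤ) < t (y + 1))]
  · rw [if_pos hc, if_neg (by omega), if_neg (by omega), ← prod_qbinom]
    have e1 : (t (u + 1) : ℤ) * al + ((t (u + 1) : ℤ) * (Tp t u - Tp t (y + 1)) +
        (t (u + 1) : ℤ) * ((t (u + 1) : ℤ) + 1) / 2) =
        ∑ i ∈ Finset.range (t (u + 1)), ((al + (Tp t u - Tp t (y + 1))) + t (u + 1) - (i : ℤ)) := by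
      rw [sum_tri]; ring
    have hy3 : 2 * r + 2 - (u + 1) = y + 1 := by omega
    rw [e1, ← prod_zpow_sum q hq0, ← Finset.prod_mul_distrib, ← Finset.prod_mul_distrib, hy3]
    refine Finset.prod_congr rfl fun i hi => ?_
    have hi' := Finset.mem_range.1 hi
    unfold cTop cIn
    rw [Nat.add_sub_cancel, hy, hy1]
    simp only [hct]
    rw [if_pos (show u + 1 ≤ n by omega), if_neg (show ¬ u + 1 ≤ y by omega),
      if_neg (show ¬ u + 1 ≤ y + 1 by omega), if_pos le_rfl, if_neg (show ¬ u + 1 ≤ u by omega)]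
    apply zpow_key q hq <;> linarith [(by exact_mod_cast hi' : (i : ℤ) < t (u + 1))]

lemma cnt_ratio (q : ℚ) (hq : 1 < q) (r : ℕ) (f D a E : ℕ → ℤ) (t : ℕ → ℕ)
    (ht : ∀ x, 2 * r + 1 < x → t x = 0)
    (f0 : f 0 = 0) (D0 : D 0 = 0)
    (hb : ∀ u ∈ Finset.Icc 1 (2 * r + 1), a u + t u + t (2 * r + 1 + 1 - u) =
      (f u - f (u - 1)) + (D (2 * r + 1 - u) - D (2 * r + 1 - (u - 1))) - (D u - D (u - 1)))
    (hE : ∀ j, E j = D j + Tp t j) (w : ℕ) (hw : w ≤ 2 * r + 1) :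
    cnt (cTop q (2 * r + 1) f D) (lev (2 * r + 1) t w) =
      cnt (cIn q D E) (lev (2 * r + 1) t w) *
      ∏ u ∈ Finset.Ioc (2 * r + 1 - w) (2 * r + 1), (q ^ (Nu r a t u) * Gu q r a t u) := by
  induction w with
  | zero => simp [lev, cnt]
  | succ w ih =>
    have hI : Finset.Ioc (2 * r + 1 - (w + 1)) (2 * r + 1) =
        insert (2 * r + 1 - w) (Finset.Ioc (2 * r + 1 - w) (2 * r + 1)) := by
      ext x
      simp only [Finset.mem_insert, Finset.mem_Ioc]
      omega
    rw [lev, cnt_replicate_append, cnt_replicate_append, ih (by omega),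
      block q hq r f D a E t ht f0 D0 hb hE w (by omega), hI, Finset.prod_insert (by simp)]
    ring

lemma cIn_ne (q : ℚ) (hq : 1 < q) (n : ℕ) (D E : ℕ → ℤ) (t : ℕ → ℕ)
    (ht : ∀ x, n < x → t x = 0)
    (hE : ∀ j, E j = D j + Tp t j) (w : ℕ) (hw : w ≤ n) :
    cnt (cIn q D E) (lev n t w) ≠ 0 := by
  induction w with
  | zero => simp [lev, cnt]
  | succ w ih =>
    rw [lev, cnt_replicate_append]
    refine mul_ne_zero (ih (by omega)) (Finset.prod_ne_zero_iff.2 fun i hi => ?_)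
    have hi' : (i : ℤ) < t (n - w) := by exact_mod_cast Finset.mem_range.1 hi
    obtain ⟨u, hu⟩ : ∃ u, n - w = u + 1 := ⟨n - w - 1, by omega⟩
    unfold cIn
    rw [ct_replicate_append, ct_replicate_append, ct_lev n t ht w (by omega),
      ct_lev n t ht w (by omega), hu, Nat.add_sub_cancel, if_pos le_rfl, if_pos le_rfl,
      if_neg (by omega), if_neg (by omega), hE, hE, Tp_succ]
    rw [hu] at hi'
    apply ne_of_gt
    rw [sub_pos]
    apply zpow_lt_zpow_right₀ hq
    linarith

lemma final_prod (q : ℚ) (hq : 1 < q) (r : ℕ) (a : ℕ → ℤ) (t : ℕ → ℕ) :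
    ∏ u ∈ Finset.Ioc 0 (2 * r + 1), (q ^ (Nu r a t u) * Gu q r a t u) =
    q ^ ((∑ j ∈ Finset.Icc 1 (2 * r + 1), ∑ u ∈ Finset.Icc 1 (2 * r + 1),
                  if j < u then a j * (t u : ℤ) else 0) +
               (∑ j ∈ Finset.Icc 1 (2 * r + 1), ∑ u ∈ Finset.Icc 1 (2 * r + 1),
                  if (2 * r + 2 - j < u ∧ u < j) then (t u : ℤ) * (t j : ℤ) else 0) +
               (∑ u ∈ Finset.Icc 1 (2 * r + 1),
                  if r + 1 < u then (t u : ℤ) * ((t u : ℤ) + 1) / 2 else 0)) *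
      (∏ u ∈ (Finset.Icc 1 (2 * r + 1)).filter (fun u => u < r + 1),
              qbinom q (a u + (t u : ℤ)) (t u)) *
      (∏ u ∈ (Finset.Icc 1 (2 * r + 1)).filter (fun u => r + 1 < u),
              qbinom q (a u + (t u : ℤ) + (t (2 * r + 2 - u) : ℤ)) (t u)) *
      (∏ i ∈ Finset.Icc 1 (t (r + 1)),
              qint q (a (r + 1) + 2 * (i : ℤ)) / qint q (i : ℤ)) := by
  have hI : Finset.Ioc 0 (2 * r + 1) = Finset.Icc 1 (2 * r + 1) := rfl
  have hI2 : Finset.Icc 1 (2 * r + 1) =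
      (Finset.Icc 1 (2 * r + 1)).filter (fun u => u < r + 1) ∪
      ((Finset.Icc 1 (2 * r + 1)).filter (fun u => r + 1 < u) ∪ {r + 1}) := by
    ext x
    simp only [Finset.mem_union, Finset.mem_filter, Finset.mem_Icc, Finset.mem_singleton]
    omega
  have hG : ∏ u ∈ Finset.Icc 1 (2 * r + 1), Gu q r a t u =
      (∏ u ∈ (Finset.Icc 1 (2 * r + 1)).filter (fun u => u < r + 1),
              qbinom q (a u + (t u : ℤ)) (t u)) *
      ((∏ u ∈ (Finset.Icc 1 (2 * r + 1)).filter (fun u => r + 1 < u),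
              qbinom q (a u + (t u : ℤ) + (t (2 * r + 2 - u) : ℤ)) (t u)) *
      (∏ i ∈ Finset.Icc 1 (t (r + 1)),
              qint q (a (r + 1) + 2 * (i : ℤ)) / qint q (i : ℤ))) := by
    conv_lhs => rw [hI2]
    rw [Finset.prod_union, Finset.prod_union]
    · congr 1
      · refine Finset.prod_congr rfl fun u hu => ?_
        have := (Finset.mem_filter.1 hu).2
        unfold Gu
        rw [if_pos this]
      · congr 1
        · refine Finset.prod_congr rfl fun u hu => ?_
          have := (Finset.mem_filter.1 hu).2
          unfold Gu
          rw [if_neg (by omega), if_neg (by omega)]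
        · rw [Finset.prod_singleton]
          unfold Gu
          rw [if_neg (by omega), if_pos rfl]
    · rw [Finset.disjoint_left]
      intro x
      simp only [Finset.mem_filter, Finset.mem_singleton]
      omega
    · rw [Finset.disjoint_left]
      intro x
      simp only [Finset.mem_union, Finset.mem_filter, Finset.mem_singleton]
      omega
  rw [hI, Finset.prod_mul_distrib, hG, prod_zpow_sum q (by linarith)]
  have hN : ∑ u ∈ Finset.Icc 1 (2 * r + 1), Nu r a t u =
      (∑ j ∈ Finset.Icc 1 (2 * r + 1), ∑ u ∈ Finset.Icc 1 (2 * r + 1),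
                  if j < u then a j * (t u : ℤ) else 0) +
               (∑ j ∈ Finset.Icc 1 (2 * r + 1), ∑ u ∈ Finset.Icc 1 (2 * r + 1),
                  if (2 * r + 2 - j < u ∧ u < j) then (t u : ℤ) * (t j : ℤ) else 0) +
               (∑ u ∈ Finset.Icc 1 (2 * r + 1),
                  if r + 1 < u then (t u : ℤ) * ((t u : ℤ) + 1) / 2 else 0) := by
    unfold Nu
    rw [Finset.sum_add_distrib, Finset.sum_add_distrib, Finset.sum_comm]
  rw [hN]
  ring

end Numeric

section Matrices

/-- prefix sums of a matrix -/
def PA (A : ℕ → ℕ → ℤ) (i j : ℕ) : ℤ := ∑ a ∈ Finset.Icc 1 i, ∑ b ∈ Finset.Icc 1 j, A a b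

lemma PA_zero_left (A : ℕ → ℕ → ℤ) (j : ℕ) : PA A 0 j = 0 := by simp [PA]

lemma PA_zero_right (A : ℕ → ℕ → ℤ) (i : ℕ) : PA A i 0 = 0 := by simp [PA]

lemma PA_succ_left (A : ℕ → ℕ → ℤ) (i j : ℕ) :
    PA A (i + 1) j = PA A i j + ∑ b ∈ Finset.Icc 1 j, A (i + 1) b := by
  unfold PA
  rw [Finset.sum_Icc_succ_top (by omega)]

lemma PA_succ_succ (A : ℕ → ℕ → ℤ) (i j : ℕ) :
    PA A (i + 1) (j + 1) = PA A i (j + 1) + PA A (i + 1) j - PA A i j + A (i + 1) (j + 1) := by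
  rw [PA_succ_left, PA_succ_left, Finset.sum_Icc_succ_top (by omega)]
  ring

/-- the modified matrix -/
def Apr (r : ℕ) (A : ℕ → ℕ → ℤ) (t : ℕ → ℕ) : ℕ → ℕ → ℤ :=
  fun a b => A a b - ∑ u ∈ Finset.Icc 1 (2 * r + 1),
    (t u : ℤ) * (Eth (2 * r + 1) r u a b - Eth (2 * r + 1) (r + 1) u a b)

lemma sum_ind (n : ℕ) (t : ℕ → ℕ) (b : ℕ) (hb : b ∈ Finset.Icc 1 n) :
    (∑ u ∈ Finset.Icc 1 n, (t u : ℤ) * (if b = u then 1 else 0)) = t b := by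
  rw [Finset.sum_eq_single b]
  · simp
  · intro x _ hx
    rw [if_neg (Ne.symm hx), mul_zero]
  · exact fun h => absurd hb h

lemma sum_ind' (n : ℕ) (t : ℕ → ℕ) (b : ℕ) (hb : b ∈ Finset.Icc 1 n) :
    (∑ u ∈ Finset.Icc 1 n, (t u : ℤ) * (if b = n + 1 - u then 1 else 0)) = t (n + 1 - b) := by
  have h := Finset.mem_Icc.1 hb
  rw [← sum_ind n t (n + 1 - b) (Finset.mem_Icc.2 ⟨by omega, by omega⟩)]
  refine Finset.sum_congr rfl fun u hu => ?_
  have h' := Finset.mem_Icc.1 hu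
  congr 1
  exact if_congr (by omega) rfl rfl

lemma Apr_r (r : ℕ) (A : ℕ → ℕ → ℤ) (t : ℕ → ℕ) (b : ℕ) (hb : b ∈ Finset.Icc 1 (2 * r + 1)) :
    Apr r A t r b = A r b - t b := by
  unfold Apr
  rw [← sum_ind _ t b hb]
  congr 1
  refine Finset.sum_congr rfl fun u _ => ?_
  unfold Eth
  congr 1
  simp only [show ¬ (r = 2 * r + 1 + 1 - r) by omega, show ¬ (r = r + 1) by omega,
    show ¬ (r = 2 * r + 1 + 1 - (r + 1)) by omega, false_and, if_false, true_and]
  ring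

lemma Apr_r1 (r : ℕ) (A : ℕ → ℕ → ℤ) (t : ℕ → ℕ) (b : ℕ) (hb : b ∈ Finset.Icc 1 (2 * r + 1)) :
    Apr r A t (r + 1) b = A (r + 1) b + t b + t (2 * r + 1 + 1 - b) := by
  unfold Apr
  rw [← sum_ind _ t b hb, ← sum_ind' _ t b hb, add_assoc, ← Finset.sum_add_distrib, sub_eq_add_neg,
    ← Finset.sum_neg_distrib]
  congr 1
  refine Finset.sum_congr rfl fun u _ => ?_
  unfold Eth
  rw [show 2 * r + 1 + 1 - (r + 1) = r + 1 by omega, show 2 * r + 1 + 1 - r = r + 2 by omega]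
  simp only [show ¬ (r + 1 = r + 2) by omega, show ¬ (r + 1 = r) by omega, false_and, if_false,
    true_and]
  ring

lemma Apr_r2 (r : ℕ) (A : ℕ → ℕ → ℤ) (t : ℕ → ℕ) (b : ℕ) (hb : b ∈ Finset.Icc 1 (2 * r + 1)) :
    Apr r A t (r + 2) b = A (r + 2) b - t (2 * r + 1 + 1 - b) := by
  unfold Apr
  rw [← sum_ind' _ t b hb]
  congr 1
  refine Finset.sum_congr rfl fun u _ => ?_
  unfold Eth
  congr 1
  rw [show 2 * r + 1 + 1 - (r + 1) = r + 1 by omega, show 2 * r + 1 + 1 - r = r + 2 by omega]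
  simp only [show ¬ (r + 2 = r + 1) by omega, show ¬ (r + 2 = r) by omega, false_and, if_false,
    true_and]
  ring

lemma Apr_other (r : ℕ) (A : ℕ → ℕ → ℤ) (t : ℕ → ℕ) (a b : ℕ) (h0 : a ≠ r) (h1 : a ≠ r + 1)
    (h2 : a ≠ r + 2) : Apr r A t a b = A a b := by
  unfold Apr
  rw [sub_eq_self]
  refine Finset.sum_eq_zero fun u _ => ?_
  unfold Eth
  simp only [show ¬ (a = 2 * r + 1 + 1 - r) by omega, h0, h1,
    show ¬ (a = 2 * r + 1 + 1 - (r + 1)) by omega, false_and, if_false]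
  ring

lemma sum_rev (n : ℕ) (t : ℕ → ℕ) (j : ℕ) (hj : j ≤ n) :
    (∑ b ∈ Finset.Icc 1 j, (t (n + 1 - b) : ℤ)) = Tp t n - Tp t (n - j) := by
  induction j with
  | zero => simp
  | succ j ih =>
    rw [Finset.sum_Icc_succ_top (by omega), ih (by omega)]
    obtain ⟨x, hx⟩ : ∃ x, n - j = x + 1 := ⟨n - j - 1, by omega⟩
    rw [hx, show n - (j + 1) = x by omega, show n + 1 - (j + 1) = x + 1 by omega, Tp_succ]
    ring

/-- change of prefix sums -/
lemma PA_Apr (r : ℕ) (hr : 1 ≤ r) (A : ℕ → ℕ → ℤ) (t : ℕ → ℕ) (i j : ℕ) (hj : j ≤ 2 * r + 1) :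
    PA (Apr r A t) i j = PA A i j + (if i = r then - Tp t j else
      if i = r + 1 then Tp t (2 * r + 1) - Tp t (2 * r + 1 - j) else 0) := by
  have hmem : ∀ b ∈ Finset.Icc 1 j, b ∈ Finset.Icc 1 (2 * r + 1) := by
    intro b hb
    rw [Finset.mem_Icc] at *
    omega
  have hs := sum_rev (2 * r + 1) t j hj
  have hT : Tp t j = ∑ b ∈ Finset.Icc 1 j, (t b : ℤ) := rfl
  induction i with
  | zero => rw [PA_zero_left, PA_zero_left, if_neg (by omega), if_neg (by omega)]; rfl
  | succ i ih =>
    rw [PA_succ_left, PA_succ_left, ih]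
    by_cases h1 : i + 1 = r
    · rw [Finset.sum_congr rfl fun b hb => by rw [h1, Apr_r r A t b (hmem b hb)],
        Finset.sum_sub_distrib, if_neg (by omega), if_neg (by omega), if_pos h1, h1, ← hT]
      ring
    by_cases h2 : i = r
    · subst h2
      rw [Finset.sum_congr rfl fun b hb => Apr_r1 i A t b (hmem b hb),
        Finset.sum_add_distrib, Finset.sum_add_distrib, if_pos rfl, if_neg (by omega), if_pos rfl,
        ← hT, hs]
      ring
    by_cases h3 : i = r + 1
    · subst h3
      rw [Finset.sum_congr rfl fun b hb => Apr_r2 r A t b (hmem b hb),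
        Finset.sum_sub_distrib, if_neg (by omega), if_pos rfl, if_neg (by omega), if_neg (by omega),
        hs]
      ring
    · rw [Finset.sum_congr rfl fun b hb => Apr_other r A t (i + 1) b h1 (by omega) (by omega),
        if_neg (by omega), if_neg (by omega), if_neg (by omega), if_neg (by omega)]
      ring

end Matrices

section FlagsSec

variable {k V : Type*} [Field k] [AddCommGroup V] [Module k V] [FiniteDimensional k V]
variable {Φ : V →ₗ[k] V →ₗ[k] k}

lemma flag_mono {n : ℕ} {L : ℕ → Submodule k V} (h : IsFlag Φ n L) : Monotone L :=
  monotone_nat_of_le_succ h.2.1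

/-- relative position -/
def InO (n : ℕ) (A : ℕ → ℕ → ℤ) (L M : ℕ → Submodule k V) : Prop :=
  ∀ i ∈ Finset.Icc 1 n, ∀ j ∈ Finset.Icc 1 n,
    (relDim (L i ⊓ M j) ((L (i - 1) ⊓ M j) ⊔ (L i ⊓ M (j - 1))) : ℤ) = A i j

lemma relDim_flag {L M : ℕ → Submodule k V} (hL : Monotone L) (hM : Monotone M) (i j : ℕ) :
    (relDim (L i ⊓ M j) ((L (i - 1) ⊓ M j) ⊔ (L i ⊓ M (j - 1))) : ℤ) =
      dm (L i ⊓ M j) - dm (L (i - 1) ⊓ M j) - dm (L i ⊓ M (j - 1)) +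
        dm (L (i - 1) ⊓ M (j - 1)) := by
  have h1 := hL (Nat.sub_le i 1)
  have h2 := hM (Nat.sub_le j 1)
  rw [relDim_eq (inf_le_inf_right _ h1) (inf_le_inf_left _ h2)]
  congr 2
  apply le_antisymm
  · exact le_inf (inf_le_left.trans inf_le_left) (inf_le_right.trans inf_le_right)
  · exact le_inf (inf_le_inf_left _ h2) (inf_le_inf_right _ h1)

lemma InO_iff {n : ℕ} {A : ℕ → ℕ → ℤ} {L M : ℕ → Submodule k V}
    (hL : Monotone L) (hM : Monotone M) (hL0 : L 0 = ⊥) (hM0 : M 0 = ⊥) :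
    InO n A L M ↔ ∀ i ≤ n, ∀ j ≤ n, dm (L i ⊓ M j) = PA A i j := by
  constructor
  · intro h i
    induction i with
    | zero => intro _ j _; rw [hL0, bot_inf_eq, dm_bot, PA_zero_left]
    | succ i ihi =>
      intro hi j
      induction j with
      | zero => intro _; rw [hM0, inf_bot_eq, dm_bot, PA_zero_right]
      | succ j ihj =>
        intro hj
        have := h (i + 1) (Finset.mem_Icc.2 ⟨by omega, hi⟩) (j + 1)
          (Finset.mem_Icc.2 ⟨by omega, hj⟩)
        rw [relDim_flag hL hM, Nat.add_sub_cancel, Nat.add_sub_cancel, ihj (by omega),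
          ihi (by omega) _ hj, ihi (by omega) _ (by omega)] at this
        rw [PA_succ_succ]
        linarith
  · intro h i hi j hj
    rw [Finset.mem_Icc] at hi hj
    rw [relDim_flag hL hM]
    obtain ⟨i, rfl⟩ : ∃ x, i = x + 1 := ⟨i - 1, by omega⟩
    obtain ⟨j, rfl⟩ : ∃ x, j = x + 1 := ⟨j - 1, by omega⟩
    rw [Nat.add_sub_cancel, Nat.add_sub_cancel, h _ hi.2 _ hj.2, h _ (by omega) _ hj.2,
      h _ hi.2 _ (by omega), h _ (by omega) _ (by omega), PA_succ_succ]
    ring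

lemma flag_agree {r : ℕ} {L L' : ℕ → Submodule k V} (hL : IsFlag Φ (2 * r + 1) L)
    (hL' : IsFlag Φ (2 * r + 1) L') (hlt : ∀ i, i < r → L' i = L i) (i : ℕ) (hi : r + 1 < i) :
    L' i = L i := by
  by_cases h : i ≤ 2 * r + 1
  · have e1 := hL.2.2.2 (2 * r + 1 - i) (by omega)
    have e2 := hL'.2.2.2 (2 * r + 1 - i) (by omega)
    rw [show 2 * r + 1 - (2 * r + 1 - i) = i by omega] at e1 e2
    rw [e1, e2, hlt _ (by omega)]
  · rw [hL.2.2.1 i (by omega), hL'.2.2.1 i (by omega)]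

lemma dm_mid (halt : ∀ v : V, Φ v v = 0) (hnondeg : ∀ v : V, (∀ w : V, Φ v w = 0) → v = 0)
    {r : ℕ} {L M : ℕ → Submodule k V} (hL : IsFlag Φ (2 * r + 1) L)
    (hM : IsFlag Φ (2 * r + 1) M) (j : ℕ) (hj : j ≤ 2 * r + 1) :
    dm (L (r + 1) ⊓ M j) = dm (M j) - dm (L r) + dm (L r ⊓ M (2 * r + 1 - j)) := by
  have e1 := hL.2.2.2 r (by omega)
  rw [show 2 * r + 1 - r = r + 1 by omega] at e1
  have e2 := hM.2.2.2 (2 * r + 1 - j) (by omega)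
  rw [show 2 * r + 1 - (2 * r + 1 - j) = j by omega] at e2
  rw [e1, e2, dm_perp_inf halt hnondeg]

/-- changing the flag `L` to `L'` changes the matrix in the expected way. -/
lemma InO_change (halt : ∀ v : V, Φ v v = 0)
    (hnondeg : ∀ v : V, (∀ w : V, Φ v w = 0) → v = 0)
    {r : ℕ} (hr : 1 ≤ r) {L L' M : ℕ → Submodule k V} (hL : IsFlag Φ (2 * r + 1) L)
    (hL' : IsFlag Φ (2 * r + 1) L') (hM : IsFlag Φ (2 * r + 1) M)
    (hlt : ∀ i, i < r → L' i = L i) (A : ℕ → ℕ → ℤ) (t : ℕ → ℕ)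
    (ht : ∀ j ≤ 2 * r + 1, dm (L' r ⊓ M j) = dm (L r ⊓ M j) + Tp t j) :
    InO (2 * r + 1) A L' M ↔ InO (2 * r + 1) (Apr r A t) L M := by
  have hMn : M (2 * r + 1) = ⊤ := hM.2.2.1 _ le_rfl
  rw [InO_iff (flag_mono hL') (flag_mono hM) hL'.1 hM.1,
    InO_iff (flag_mono hL) (flag_mono hM) hL.1 hM.1]
  refine forall_congr' fun i => imp_congr_right fun hi => forall_congr' fun j =>
    imp_congr_right fun hj => ?_
  rw [PA_Apr r hr A t i j hj]
  by_cases h1 : i = r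
  · subst h1
    rw [if_pos rfl, ht j hj]
    constructor <;> intro h <;> linarith
  by_cases h2 : i = r + 1
  · subst h2
    rw [if_neg (by omega), if_pos rfl, dm_mid halt hnondeg hL' hM j hj,
      dm_mid halt hnondeg hL hM j hj, ht _ (by omega)]
    have := ht (2 * r + 1) le_rfl
    rw [hMn, inf_top_eq, inf_top_eq] at this
    constructor <;> intro h <;> linarith
  · rw [if_neg h1, if_neg h2, add_zero]
    have : L' i = L i := by
      by_cases h3 : i < r
      · exact hlt i h3
      · exact flag_agree hL hL' hlt i (by omega)
    rw [this]

lemma Eth_val (r i j : ℕ) : Eth (2 * r + 1) (r + 1) r i j =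
    (if i = r + 1 ∧ j = r then 1 else 0) + (if i = r + 1 ∧ j = r + 2 then 1 else 0) := by
  unfold Eth
  rw [show 2 * r + 1 + 1 - (r + 1) = r + 1 by omega, show 2 * r + 1 + 1 - r = r + 2 by omega]

/-- forward direction for the matrix `C` -/
lemma InO_C_fwd {r : ℕ} (hr : 1 ≤ r) {L L' : ℕ → Submodule k V} (hL : IsFlag Φ (2 * r + 1) L)
    (hL' : IsFlag Φ (2 * r + 1) L') (C : ℕ → ℕ → ℤ) (R : ℕ)
    (hCdiag : ∀ i ∈ Finset.Icc 1 (2 * r + 1), ∀ j ∈ Finset.Icc 1 (2 * r + 1), i ≠ j →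
      C i j = (R : ℤ) * Eth (2 * r + 1) (r + 1) r i j)
    (h : InO (2 * r + 1) C L L') :
    (∀ i, i < r → L' i = L i) ∧ L r ≤ L' r ∧ dm (L' r) = dm (L r) + R := by
  rw [InO_iff (flag_mono hL) (flag_mono hL') hL.1 hL'.1] at h
  have hn : L (2 * r + 1) = ⊤ := hL.2.2.1 _ le_rfl
  have hn' : L' (2 * r + 1) = ⊤ := hL'.2.2.1 _ le_rfl
  have dL : ∀ i ≤ 2 * r + 1, dm (L i) = PA C i (2 * r + 1) := by
    intro i hi
    rw [← h i hi _ le_rfl, hn', inf_top_eq]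
  have dL' : ∀ i ≤ 2 * r + 1, dm (L' i) = PA C (2 * r + 1) i := by
    intro i hi
    rw [← h _ le_rfl i hi, hn, top_inf_eq]
  have hrow : ∀ i ≤ r, PA C i (2 * r + 1) = PA C i i := by
    intro i hi
    unfold PA
    refine Finset.sum_congr rfl fun a ha => (Finset.sum_subset ?_ ?_).symm
    · exact Finset.Icc_subset_Icc_right (by omega)
    · intro b hb hb'
      rw [Finset.mem_Icc] at ha hb hb'
      rw [hCdiag a (Finset.mem_Icc.2 (by omega)) b (Finset.mem_Icc.2 (by omega)) (by omega),
        Eth_val, if_neg (by omega), if_neg (by omega)]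
      simp
  have hle : ∀ i ≤ r, L i ≤ L' i := by
    intro i hi
    have h1 := h i (by omega) i (by omega)
    rw [← hrow i hi, ← dL i (by omega)] at h1
    have := eq_of_dm inf_le_left h1
    exact inf_eq_left.1 this
  have hcol : ∀ i ≤ r, PA C (2 * r + 1) i = PA C i i + if i = r then (R : ℤ) else 0 := by
    intro i hi
    have s1 : PA C (2 * r + 1) i = ∑ b ∈ Finset.Icc 1 i, ∑ a ∈ Finset.Icc 1 (2 * r + 1), C a b :=
      Finset.sum_comm
    have s2 : PA C i i = ∑ b ∈ Finset.Icc 1 i, ∑ a ∈ Finset.Icc 1 i, C a b := Finset.sum_comm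
    have e : (if i = r then (R : ℤ) else 0) =
        ∑ b ∈ Finset.Icc 1 i, if b = r then (R : ℤ) else 0 := by
      rw [Finset.sum_ite_eq']
      refine if_congr ?_ rfl rfl
      rw [Finset.mem_Icc]
      omega
    rw [s1, s2, e, ← Finset.sum_add_distrib]
    refine Finset.sum_congr rfl fun b hb => ?_
    rw [Finset.mem_Icc] at hb
    have hsplit : Finset.Icc 1 (2 * r + 1) = Finset.Icc 1 i ∪ Finset.Icc (i + 1) (2 * r + 1) := by
      ext x
      simp only [Finset.mem_union, Finset.mem_Icc]
      omega
    rw [hsplit, Finset.sum_union]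
    · congr 1
      have e2 : ∀ a ∈ Finset.Icc (i + 1) (2 * r + 1), C a b =
          if a = r + 1 then (if b = r then (R : ℤ) else 0) else 0 := by
        intro a ha
        rw [Finset.mem_Icc] at ha
        rw [hCdiag a (Finset.mem_Icc.2 (by omega)) b (Finset.mem_Icc.2 (by omega)) (by omega),
          Eth_val, if_neg (show ¬ (a = r + 1 ∧ b = r + 2) by omega), add_zero, ite_and]
        split_ifs <;> simp
      rw [Finset.sum_congr rfl e2, Finset.sum_ite_eq', if_pos (Finset.mem_Icc.2 (by omega))]
    · rw [Finset.disjoint_left]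
      intro x
      simp only [Finset.mem_Icc]
      omega
  refine ⟨fun i hi => ?_, hle r le_rfl, ?_⟩
  · refine (eq_of_dm (hle i (by omega)) ?_).symm
    rw [dL i (by omega), dL' i (by omega), hrow i (by omega), hcol i (by omega),
      if_neg (by omega), add_zero]
  · rw [dL r (by omega), dL' r (by omega), hrow r le_rfl, hcol r le_rfl, if_pos rfl]

/-- backward direction for the matrix `C` -/
lemma InO_C_bwd (halt : ∀ v : V, Φ v v = 0)
    (hnondeg : ∀ v : V, (∀ w : V, Φ v w = 0) → v = 0)
    {r : ℕ} (hr : 1 ≤ r) {L L' M : ℕ → Submodule k V} (hL : IsFlag Φ (2 * r + 1) L)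
    (hL' : IsFlag Φ (2 * r + 1) L') (hM : IsFlag Φ (2 * r + 1) M) (A C : ℕ → ℕ → ℤ) (R : ℕ)
    (hroco : ∀ i ∈ Finset.Icc 1 (2 * r + 1), roM (2 * r + 1) A i = coM (2 * r + 1) C i)
    (hCdiag : ∀ i ∈ Finset.Icc 1 (2 * r + 1), ∀ j ∈ Finset.Icc 1 (2 * r + 1), i ≠ j →
      C i j = (R : ℤ) * Eth (2 * r + 1) (r + 1) r i j)
    (hlt : ∀ i, i < r → L' i = L i) (hle : L r ≤ L' r) (hdim : dm (L' r) = dm (L r) + R)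
    (hA : InO (2 * r + 1) A L' M) :
    InO (2 * r + 1) C L L' := by
  have mL := flag_mono hL
  have mL' := flag_mono hL'
  have hn : L (2 * r + 1) = ⊤ := hL.2.2.1 _ le_rfl
  have hMn : M (2 * r + 1) = ⊤ := hM.2.2.1 _ le_rfl
  have hgt := flag_agree hL hL' hlt
  have p1 := hL.2.2.2 r (by omega)
  have p2 := hL'.2.2.2 r (by omega)
  rw [show 2 * r + 1 - r = r + 1 by omega] at p1 p2
  have hle' : L' (r + 1) ≤ L (r + 1) := by rw [p1, p2]; exact perp_anti hle
  have hdim' : dm (L (r + 1)) = dm (L' (r + 1)) + R := by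
    rw [p1, p2, dm_perp halt hnondeg, dm_perp halt hnondeg, hdim]; ring
  have dd1 : ∀ i j, j ≤ i → ¬ (i = r ∧ j = r) → dm (L i ⊓ L' j) = dm (L' j) := by
    intro i j hji hne
    congr 1
    rw [inf_eq_right]
    by_cases h1 : j < r
    · rw [hlt j h1]; exact mL hji
    by_cases h2 : r + 1 < i
    · rw [← hgt i h2]; exact mL' hji
    have : i = r + 1 := by omega
    subst this
    exact (mL' hji).trans hle'
  have dd2 : ∀ i j, i ≤ j → ¬ (i = r + 1 ∧ j = r + 1) → dm (L i ⊓ L' j) = dm (L i) := by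
    intro i j hji hne
    congr 1
    rw [inf_eq_left]
    by_cases h1 : i < r
    · rw [← hlt i h1]; exact mL' hji
    by_cases h2 : r + 1 < j
    · rw [hgt j h2]; exact mL hji
    have : i = r := by omega
    subst this
    exact hle.trans (mL' hji)
  -- off-diagonal entries
  have off : ∀ i ∈ Finset.Icc 1 (2 * r + 1), ∀ j ∈ Finset.Icc 1 (2 * r + 1), i ≠ j →
      dm (L i ⊓ L' j) - dm (L (i - 1) ⊓ L' j) - dm (L i ⊓ L' (j - 1)) +
        dm (L (i - 1) ⊓ L' (j - 1)) = C i j := by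
    intro i hi j hj hij
    rw [hCdiag i hi j hj hij, Eth_val]
    rw [Finset.mem_Icc] at hi hj
    rcases lt_or_gt_of_ne hij with h | h
    · rw [dd2 i j (by omega) (by omega), dd2 (i - 1) j (by omega) (by omega),
        dd2 (i - 1) (j - 1) (by omega) (by omega), if_neg (by omega)]
      by_cases hs : i = r + 1 ∧ j = r + 2
      · obtain ⟨rfl, rfl⟩ := hs
        rw [show r + 2 - 1 = r + 1 by omega, dd1 (r + 1) (r + 1) le_rfl (by omega), hdim',
          if_pos ⟨rfl, rfl⟩]
        ring
      · rw [dd2 i (j - 1) (by omega) (by omega), if_neg hs]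
        ring
    · rw [dd1 i j (by omega) (by omega), dd1 i (j - 1) (by omega) (by omega),
        dd1 (i - 1) (j - 1) (by omega) (by omega),
        if_neg (show ¬ (i = r + 1 ∧ j = r + 2) by omega)]
      by_cases hs : i = r + 1 ∧ j = r
      · obtain ⟨rfl, rfl⟩ := hs
        rw [Nat.add_sub_cancel, dd2 j j le_rfl (by omega), hdim, if_pos ⟨rfl, rfl⟩]
        ring
      · rw [dd1 (i - 1) j (by omega) (by omega), if_neg hs]
        ring
  -- column sums
  set c : ℕ → ℕ → ℤ := fun i j => dm (L i ⊓ L' j) - dm (L (i - 1) ⊓ L' j) -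
    dm (L i ⊓ L' (j - 1)) + dm (L (i - 1) ⊓ L' (j - 1)) with hc
  have hcol : ∀ j, ∀ m, ∑ i ∈ Finset.Icc 1 m, c i j = dm (L m ⊓ L' j) - dm (L m ⊓ L' (j - 1)) := by
    intro j m
    induction m with
    | zero => simp [hL.1, dm_bot]
    | succ m ih =>
      rw [Finset.sum_Icc_succ_top (by omega), ih]
      simp only [hc, Nat.add_sub_cancel]
      ring
  rw [InO_iff mL' (flag_mono hM) hL'.1 hM.1] at hA
  have hro : ∀ j ∈ Finset.Icc 1 (2 * r + 1), ∑ i ∈ Finset.Icc 1 (2 * r + 1), c i j =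
      ∑ i ∈ Finset.Icc 1 (2 * r + 1), C i j := by
    intro j hj
    have h1 := hroco j hj
    unfold roM coM at h1
    rw [← h1, hcol, hn, top_inf_eq, top_inf_eq]
    rw [Finset.mem_Icc] at hj
    obtain ⟨x, rfl⟩ : ∃ x, j = x + 1 := ⟨j - 1, by omega⟩
    have h2 := hA (x + 1) hj.2 _ le_rfl
    have h3 := hA x (by omega) _ le_rfl
    rw [hMn, inf_top_eq] at h2 h3
    rw [Nat.add_sub_cancel, h2, h3, PA_succ_left]
    ring
  intro i hi j hj
  rw [relDim_flag mL mL']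
  by_cases hij : i = j
  · subst hij
    have h1 := hro i hi
    rw [← Finset.add_sum_erase _ _ hi, ← Finset.add_sum_erase _ _ hi] at h1
    have h2 : ∑ x ∈ (Finset.Icc 1 (2 * r + 1)).erase i, c x i =
        ∑ x ∈ (Finset.Icc 1 (2 * r + 1)).erase i, C x i := by
      refine Finset.sum_congr rfl fun x hx => ?_
      rw [Finset.mem_erase] at hx
      exact off x hx.2 i hi hx.1
    rw [h2] at h1
    have h3 : c i i = C i i := by linarith
    exact h3
  · exact off i hi j hj hij

end FlagsSec

section Final

variable {k V : Type*} [Field k] [AddCommGroup V] [Module k V] [FiniteDimensional k V]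
variable {Φ : V →ₗ[k] V →ₗ[k] k}

/-- the jumps between two nested subspaces along a flag -/
lemma jump_exists {M : ℕ → Submodule k V} (hM : Monotone M) (hM0 : M 0 = ⊥) (n : ℕ)
    {P Q : Submodule k V} (hPQ : P ≤ Q) :
    ∃ t : ℕ → ℕ, (∀ u, t u ≠ 0 → u ∈ Finset.Icc 1 n) ∧
      ∀ j ≤ n, dm (Q ⊓ M j) = dm (P ⊓ M j) + Tp t j := by
  refine ⟨fun u => if u ∈ Finset.Icc 1 n then ((dm (Q ⊓ M u) - dm (P ⊓ M u)) -
    (dm (Q ⊓ M (u - 1)) - dm (P ⊓ M (u - 1)))).toNat else 0, ?_, ?_⟩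
  · intro u hu
    by_contra h
    exact hu (if_neg h)
  · intro j
    induction j with
    | zero => intro _; rw [hM0, inf_bot_eq, inf_bot_eq, Tp_zero, add_zero]
    | succ j ih =>
      intro hj
      rw [Tp_succ, if_pos (Finset.mem_Icc.2 ⟨by omega, hj⟩), Nat.add_sub_cancel]
      have h1 := ih (by omega)
      have hj1 : M j ≤ M (j + 1) := hM (Nat.le_succ j)
      have h2 : (P ⊓ M (j + 1)) ⊔ (Q ⊓ M j) ≤ Q ⊓ M (j + 1) :=
        sup_le (inf_le_inf_right _ hPQ) (inf_le_inf_left _ hj1)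
      have h3 := dm_mono h2
      rw [dm_sup] at h3
      have h4 : (P ⊓ M (j + 1)) ⊓ (Q ⊓ M j) = P ⊓ M j := by
        apply le_antisymm
        · exact le_inf (inf_le_left.trans inf_le_left) (inf_le_right.trans inf_le_right)
        · exact le_inf (inf_le_inf_left _ hj1) (inf_le_inf_right _ hPQ)
      rw [h4] at h3
      rw [Int.toNat_of_nonneg (by linarith)]
      linarith

lemma Tp_sum (n : ℕ) (t : ℕ → ℕ) : Tp t n = ((∑ u ∈ Finset.Icc 1 n, t u : ℕ) : ℤ) := by
  unfold Tp
  push_cast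
  rfl

lemma Apr_unique {r : ℕ} (hr : 1 ≤ r) {L M : ℕ → Submodule k V} (A : ℕ → ℕ → ℤ) (t s : ℕ → ℕ)
    (ht : ∀ u, t u ≠ 0 → u ∈ Finset.Icc 1 (2 * r + 1))
    (hs : ∀ u, s u ≠ 0 → u ∈ Finset.Icc 1 (2 * r + 1))
    (h1 : InO (2 * r + 1) (Apr r A t) L M) (h2 : InO (2 * r + 1) (Apr r A s) L M) : t = s := by
  funext u
  by_cases hu : u ∈ Finset.Icc 1 (2 * r + 1)
  · have e1 := h1 r (Finset.mem_Icc.2 (by omega)) u hu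
    have e2 := h2 r (Finset.mem_Icc.2 (by omega)) u hu
    rw [Apr_r r A _ u hu] at e1 e2
    omega
  · have e1 : t u = 0 := by
      by_contra h
      exact hu (ht u h)
    have e2 : s u = 0 := by
      by_contra h
      exact hu (hs u h)
    rw [e1, e2]

/-- the new flag -/
def newFlag (Φ : V →ₗ[k] V →ₗ[k] k) (r : ℕ) (L : ℕ → Submodule k V) (U : Submodule k V) :
    ℕ → Submodule k V :=
  fun i => if i = r then U else if i = r + 1 then perpB Φ U else L i

lemma newFlag_isFlag (halt : ∀ v : V, Φ v v = 0)
    (hnondeg : ∀ v : V, (∀ w : V, Φ v w = 0) → v = 0)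
    {r : ℕ} (hr : 1 ≤ r) {L : ℕ → Submodule k V} (hL : IsFlag Φ (2 * r + 1) L)
    (U : Submodule k V) (h1 : L r ≤ U) (h2 : U ≤ perpB Φ U) :
    IsFlag Φ (2 * r + 1) (newFlag Φ r L U) := by
  have p1 := hL.2.2.2 r (by omega)
  rw [show 2 * r + 1 - r = r + 1 by omega] at p1
  have vr : newFlag Φ r L U r = U := if_pos rfl
  have vr1 : newFlag Φ r L U (r + 1) = perpB Φ U := by
    unfold newFlag
    rw [if_neg (by omega), if_pos rfl]
  have vo : ∀ i, i ≠ r → i ≠ r + 1 → newFlag Φ r L U i = L i := by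
    intro i hi hi'
    unfold newFlag
    rw [if_neg hi, if_neg hi']
  refine ⟨?_, ?_, ?_, ?_⟩
  · rw [vo 0 (by omega) (by omega), hL.1]
  · intro i
    by_cases c1 : i = r
    · subst c1
      rw [vr, vr1]
      exact h2
    by_cases c2 : i = r + 1
    · subst c2
      rw [vr1, vo _ (by omega) (by omega)]
      refine le_trans ?_ (hL.2.1 (r + 1))
      rw [p1]
      exact perp_anti h1
    by_cases c3 : i + 1 = r
    · rw [vo i c1 c2, c3, vr]
      refine le_trans (hL.2.1 i) ?_
      rw [c3]
      exact h1
    · rw [vo i c1 c2, vo (i + 1) c3 (by omega)]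
      exact hL.2.1 i
  · intro i hi
    rw [vo i (by omega) (by omega)]
    exact hL.2.2.1 i hi
  · intro i hi
    by_cases c1 : i = r
    · subst c1
      rw [show 2 * i + 1 - i = i + 1 by omega, vr, vr1]
    by_cases c2 : i = r + 1
    · subst c2
      rw [show 2 * r + 1 - (r + 1) = r by omega, vr, vr1, perp_perp halt hnondeg]
    · rw [vo i c1 c2, vo _ (by omega) (by omega)]
      exact hL.2.2.2 i hi

/-- intermediate flags give a valid `t` -/
lemma jumps (halt : ∀ v : V, Φ v v = 0)
    (hnondeg : ∀ v : V, (∀ w : V, Φ v w = 0) → v = 0)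
    {r : ℕ} (hr : 1 ≤ r) {L L' M : ℕ → Submodule k V} (hL : IsFlag Φ (2 * r + 1) L)
    (hL' : IsFlag Φ (2 * r + 1) L') (hM : IsFlag Φ (2 * r + 1) M) (A C : ℕ → ℕ → ℤ) (R : ℕ)
    (hCdiag : ∀ i ∈ Finset.Icc 1 (2 * r + 1), ∀ j ∈ Finset.Icc 1 (2 * r + 1), i ≠ j →
      C i j = (R : ℤ) * Eth (2 * r + 1) (r + 1) r i j)
    (hC : InO (2 * r + 1) C L L') (hA : InO (2 * r + 1) A L' M) :
    ∃ t : ℕ → ℕ, ((∀ u, t u ≠ 0 → u ∈ Finset.Icc 1 (2 * r + 1)) ∧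
            (∑ u ∈ Finset.Icc 1 (2 * r + 1), t u = R) ∧
            (∀ u ∈ Finset.Icc 1 (2 * r + 1), (t u : ℤ) ≤ A r u)) ∧
      InO (2 * r + 1) (Apr r A t) L M ∧
      ∀ j ≤ 2 * r + 1, dm (L' r ⊓ M j) = dm (L r ⊓ M j) + Tp t j := by
  obtain ⟨hlt, hle, hd⟩ := InO_C_fwd hr hL hL' C R hCdiag hC
  obtain ⟨t, ht, hj⟩ := jump_exists (flag_mono hM) hM.1 (2 * r + 1) hle
  have hI := (InO_change halt hnondeg hr hL hL' hM hlt A t hj).1 hA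
  refine ⟨t, ⟨ht, ?_, ?_⟩, hI, hj⟩
  · have := hj _ le_rfl
    rw [hM.2.2.1 _ le_rfl, inf_top_eq, inf_top_eq, hd, Tp_sum] at this
    have h2 : ((∑ u ∈ Finset.Icc 1 (2 * r + 1), t u : ℕ) : ℤ) = R := by linarith
    exact_mod_cast h2
  · intro u hu
    have e1 := hI r (Finset.mem_Icc.2 (by omega)) u hu
    rw [Apr_r r A _ u hu] at e1
    omega

lemma card_flags (halt : ∀ v : V, Φ v v = 0)
    (hnondeg : ∀ v : V, (∀ w : V, Φ v w = 0) → v = 0)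
    {r : ℕ} (hr : 1 ≤ r) (L M : Flags Φ (2 * r + 1)) (A C : ℕ → ℕ → ℤ) (R : ℕ)
    (hroco : ∀ i ∈ Finset.Icc 1 (2 * r + 1), roM (2 * r + 1) A i = coM (2 * r + 1) C i)
    (hCdiag : ∀ i ∈ Finset.Icc 1 (2 * r + 1), ∀ j ∈ Finset.Icc 1 (2 * r + 1), i ≠ j →
      C i j = (R : ℤ) * Eth (2 * r + 1) (r + 1) r i j)
    (t : ℕ → ℕ) (ht : ∀ u, t u ≠ 0 → u ∈ Finset.Icc 1 (2 * r + 1))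
    (hR : ∑ u ∈ Finset.Icc 1 (2 * r + 1), t u = R)
    (hI : InO (2 * r + 1) (Apr r A t) L.1 M.1) :
    Nat.card {L' : Flags Φ (2 * r + 1) //
      InO (2 * r + 1) C L.1 L'.1 ∧ InO (2 * r + 1) A L'.1 M.1} =
    Nat.card {U : Submodule k V // L.1 r ≤ U ∧ U ≤ perpB Φ U ∧
      ∀ j, dm (U ⊓ M.1 j) = dm (L.1 r ⊓ M.1 j) + Tp t j} := by
  have ht0 : ∀ x, 2 * r + 1 < x → t x = 0 := by
    intro x hx
    by_contra h
    have := Finset.mem_Icc.1 (ht x h)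
    omega
  have key : ∀ L' : Flags Φ (2 * r + 1),
      InO (2 * r + 1) C L.1 L'.1 ∧ InO (2 * r + 1) A L'.1 M.1 →
      L.1 r ≤ L'.1 r ∧ L'.1 r ≤ perpB Φ (L'.1 r) ∧
      ∀ j, dm (L'.1 r ⊓ M.1 j) = dm (L.1 r ⊓ M.1 j) + Tp t j := by
    rintro L' ⟨h1, h2⟩
    obtain ⟨s, hs, hsI, hsj⟩ := jumps halt hnondeg hr L.2 L'.2 M.2 A C R hCdiag h1 h2
    have : t = s := Apr_unique hr A t s ht hs.1 hI hsI
    subst this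
    refine ⟨(InO_C_fwd hr L.2 L'.2 C R hCdiag h1).2.1, ?_, ?_⟩
    · have p := L'.2.2.2.2 r (by omega)
      rw [show 2 * r + 1 - r = r + 1 by omega] at p
      rw [← p]
      exact L'.2.2.1 r
    · intro j
      by_cases hj : j ≤ 2 * r + 1
      · exact hsj j hj
      · obtain ⟨x, rfl⟩ := Nat.exists_eq_add_of_le (show 2 * r + 1 ≤ j by omega)
        have := hsj _ le_rfl
        rw [Tp_const _ t ht0, M.2.2.2.1 _ (by omega)]
        rwa [M.2.2.2.1 _ le_rfl] at this
  refine Nat.card_congr (Equiv.ofBijective (fun L' => ⟨L'.1.1 r, key L'.1 L'.2⟩) ⟨?_, ?_⟩)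
  · rintro ⟨L1, h1⟩ ⟨L2, h2⟩ h
    have h' : L1.1 r = L2.1 r := congrArg Subtype.val h
    apply Subtype.ext
    apply Subtype.ext
    funext i
    have l1 := (InO_C_fwd hr L.2 L1.2 C R hCdiag h1.1).1
    have l2 := (InO_C_fwd hr L.2 L2.2 C R hCdiag h2.1).1
    have p1 := L1.2.2.2.2 r (by omega)
    have p2 := L2.2.2.2.2 r (by omega)
    rw [show 2 * r + 1 - r = r + 1 by omega] at p1 p2
    show L1.1 i = L2.1 i
    by_cases c1 : i < r
    · rw [l1 i c1, l2 i c1]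
    by_cases c2 : i = r
    · rw [c2, h']
    by_cases c3 : i = r + 1
    · rw [c3, p1, p2, h']
    · rw [flag_agree L.2 L1.2 l1 i (by omega), flag_agree L.2 L2.2 l2 i (by omega)]
  · rintro ⟨U, h1, h2, h3⟩
    have hF := newFlag_isFlag halt hnondeg hr L.2 U h1 h2
    have vr : newFlag Φ r L.1 U r = U := if_pos rfl
    have hlt : ∀ i, i < r → newFlag Φ r L.1 U i = L.1 i := by
      intro i hi
      unfold newFlag
      rw [if_neg (by omega), if_neg (by omega)]
    have hA : InO (2 * r + 1) A (newFlag Φ r L.1 U) M.1 :=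
      (InO_change halt hnondeg hr L.2 hF M.2 hlt A t (fun j _ => by rw [vr]; exact h3 j)).2 hI
    have hd : dm (newFlag Φ r L.1 U r) = dm (L.1 r) + R := by
      have := h3 (2 * r + 1)
      rw [M.2.2.2.1 _ le_rfl, inf_top_eq, inf_top_eq, Tp_sum, hR] at this
      rw [vr]
      exact this
    have hC := InO_C_bwd halt hnondeg hr L.2 hF M.2 A C R hroco hCdiag hlt
      (by rw [vr]; exact h1) hd hA
    exact ⟨⟨⟨newFlag Φ r L.1 U, hF⟩, hC, hA⟩, Subtype.ext vr⟩

lemma finite_flags [Finite (Submodule k V)] (n : ℕ) : Finite (Flags Φ n) := by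
  refine Finite.of_injective (fun L : Flags Φ n => fun i : Fin n => L.1 i) ?_
  intro L1 L2 h
  apply Subtype.ext
  funext i
  by_cases hi : i < n
  · exact congrFun h ⟨i, hi⟩
  · rw [L1.2.2.2.1 i (by omega), L2.2.2.2.1 i (by omega)]

lemma conv_card [Finite (Submodule k V)] (n : ℕ) (A C : ℕ → ℕ → ℤ)
    (LL : Flags Φ n × Flags Φ n) :
    conv Φ n (eMat Φ n C) (eMat Φ n A) LL =
      (Nat.card {L' : Flags Φ n // InO n C LL.1.1 L'.1 ∧ InO n A L'.1 LL.2.1} : ℚ) := by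
  haveI := finite_flags (Φ := Φ) n
  letI := Fintype.ofFinite (Flags Φ n)
  unfold conv
  rw [finsum_eq_sum_of_fintype, Nat.card_eq_fintype_card, Fintype.card_subtype,
    Finset.card_filter]
  push_cast
  refine Finset.sum_congr rfl fun L' _ => ?_
  have e1 : eMat Φ n C (LL.1, L') = if InO n C LL.1.1 L'.1 then 1 else 0 := rfl
  have e2 : eMat Φ n A (L', LL.2) = if InO n A L'.1 LL.2.1 then 1 else 0 := rfl
  rw [e1, e2, ite_and]
  split_ifs <;> simp

lemma count_final [Fintype k] (halt : ∀ v : V, Φ v v = 0)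
    (hnondeg : ∀ v : V, (∀ w : V, Φ v w = 0) → v = 0)
    {r : ℕ} (hr : 1 ≤ r) {L M : ℕ → Submodule k V} (hL : IsFlag Φ (2 * r + 1) L)
    (hM : IsFlag Φ (2 * r + 1) M) (A : ℕ → ℕ → ℤ)
    (t : ℕ → ℕ) (ht : ∀ u, t u ≠ 0 → u ∈ Finset.Icc 1 (2 * r + 1))
    (hI : InO (2 * r + 1) (Apr r A t) L M) :
    (Nat.card {U : Submodule k V // L r ≤ U ∧ U ≤ perpB Φ U ∧
      ∀ j, dm (U ⊓ M j) = dm (L r ⊓ M j) + Tp t j} : ℚ) =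
    ∏ u ∈ Finset.Ioc 0 (2 * r + 1), ((Fintype.card k : ℚ) ^ (Nu r (A (r + 1)) t u) *
      Gu (Fintype.card k : ℚ) r (A (r + 1)) t u) := by
  haveI : Finite V := Module.finite_of_finite k
  letI : Fintype (Submodule k V) := Fintype.ofFinite _
  have hq : (1 : ℚ) < Fintype.card k := by exact_mod_cast Fintype.one_lt_card
  have ht0 : ∀ x, 2 * r + 1 < x → t x = 0 := by
    intro x hx
    by_contra h
    have := Finset.mem_Icc.1 (ht x h)
    omega
  have p1 := hL.2.2.2 r (by omega)
  rw [show 2 * r + 1 - r = r + 1 by omega] at p1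
  have hS0 : L r ≤ perpB Φ (L r) := by
    rw [← p1]
    exact hL.2.1 r
  have c1 := count_target halt hnondeg (flag_mono hM) hS0 (2 * r + 1) (hM.2.2.1 _ le_rfl)
    hM.2.2.2 (lev (2 * r + 1) t (2 * r + 1)) (mem_lev _ _ _)
    (fun j => dm (L r ⊓ M j) + Tp t j) (by
      intro j
      rw [ct_lev _ t ht0 _ le_rfl, Nat.sub_self, if_pos (Nat.zero_le _), Tp_zero, sub_zero])
  have c2 := cnt_ratio (Fintype.card k : ℚ) hq r (fun j => dm (M j)) (fun j => dm (L r ⊓ M j))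
    (A (r + 1)) (fun j => dm (L r ⊓ M j) + Tp t j) t ht0
    (by show dm (M 0) = 0; rw [hM.1, dm_bot])
    (by show dm (L r ⊓ M 0) = 0; rw [hM.1, inf_bot_eq, dm_bot])
    (by
      intro u hu
      have e := hI (r + 1) (Finset.mem_Icc.2 (by omega)) u hu
      rw [relDim_flag (flag_mono hL) (flag_mono hM), Apr_r1 r A t u hu, Nat.add_sub_cancel] at e
      rw [Finset.mem_Icc] at hu
      rw [dm_mid halt hnondeg hL hM u (by omega), dm_mid halt hnondeg hL hM (u - 1) (by omega)] at e
      rw [← e]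
      ring)
    (fun _ => rfl) (2 * r + 1) le_rfl
  have c3 := cIn_ne (Fintype.card k : ℚ) hq (2 * r + 1) (fun j => dm (L r ⊓ M j))
    (fun j => dm (L r ⊓ M j) + Tp t j) t ht0 (fun _ => rfl) (2 * r + 1) le_rfl
  rw [c1, Nat.sub_self, mul_comm] at c2
  exact mul_left_cancel₀ c3 c2

end Final

end FlagX

/-- multiplication by a divided power of `f_r`, the `h = r` case,
finite type `C`. -/
theorem statement3 {k V : Type*} [Field k] [Fintype k] [AddCommGroup V] [Module k V]
    [FiniteDimensional k V]
    (hodd : Odd (Fintype.card k))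
    (r d : ℕ) (hr : 1 ≤ r) (hd : 1 ≤ d)
    (hdim : Module.finrank k V = 2 * d)
    (Φ : V →ₗ[k] V →ₗ[k] k)
    (halt : ∀ v : V, Φ v v = 0)
    (hnondeg : ∀ v : V, (∀ w : V, Φ v w = 0) → v = 0)
    (A C : ℕ → ℕ → ℤ)
    (hA : MemXiC (2 * r + 1) d A) (hC : MemXiC (2 * r + 1) d C)
    (hroco : ∀ i ∈ Finset.Icc 1 (2 * r + 1), roM (2 * r + 1) A i = coM (2 * r + 1) C i)
    (R : ℕ)
    (hCdiag : ∀ i ∈ Finset.Icc 1 (2 * r + 1), ∀ j ∈ Finset.Icc 1 (2 * r + 1), i ≠ j →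
      C i j = (R : ℤ) * Eth (2 * r + 1) (r + 1) r i j) :
    ∀ LL : Flags Φ (2 * r + 1) × Flags Φ (2 * r + 1),
      conv Φ (2 * r + 1) (eMat Φ (2 * r + 1) C) (eMat Φ (2 * r + 1) A) LL =
      ∑ᶠ t : ℕ → ℕ,
        if (∀ u, t u ≠ 0 → u ∈ Finset.Icc 1 (2 * r + 1)) ∧
            (∑ u ∈ Finset.Icc 1 (2 * r + 1), t u = R) ∧
            (∀ u ∈ Finset.Icc 1 (2 * r + 1), (t u : ℤ) ≤ A r u)
        then
          ((Fintype.card k : ℚ) ^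
              ((∑ j ∈ Finset.Icc 1 (2 * r + 1), ∑ u ∈ Finset.Icc 1 (2 * r + 1),
                  if j < u then A (r + 1) j * (t u : ℤ) else 0) +
               (∑ j ∈ Finset.Icc 1 (2 * r + 1), ∑ u ∈ Finset.Icc 1 (2 * r + 1),
                  if (2 * r + 2 - j < u ∧ u < j) then (t u : ℤ) * (t j : ℤ) else 0) +
               (∑ u ∈ Finset.Icc 1 (2 * r + 1),
                  if r + 1 < u then (t u : ℤ) * ((t u : ℤ) + 1) / 2 else 0))) *
            (∏ u ∈ (Finset.Icc 1 (2 * r + 1)).filter (fun u => u < r + 1),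
              qbinom (Fintype.card k : ℚ) (A (r + 1) u + (t u : ℤ)) (t u)) *
            (∏ u ∈ (Finset.Icc 1 (2 * r + 1)).filter (fun u => r + 1 < u),
              qbinom (Fintype.card k : ℚ)
                (A (r + 1) u + (t u : ℤ) + (t (2 * r + 2 - u) : ℤ)) (t u)) *
            (∏ i ∈ Finset.Icc 1 (t (r + 1)),
              qint (Fintype.card k : ℚ) (A (r + 1) (r + 1) + 2 * (i : ℤ)) /
                qint (Fintype.card k : ℚ) (i : ℤ)) *
            eMat Φ (2 * r + 1)
              (fun a b => A a b - ∑ u ∈ Finset.Icc 1 (2 * r + 1),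
                (t u : ℤ) * (Eth (2 * r + 1) r u a b - Eth (2 * r + 1) (r + 1) u a b)) LL
        else 0 := by
  intro LL
  haveI : Finite V := Module.finite_of_finite k
  have hq : (1 : ℚ) < Fintype.card k := by exact_mod_cast Fintype.one_lt_card
  rw [FlagX.conv_card]
  have he : ∀ t : ℕ → ℕ, eMat Φ (2 * r + 1) (fun a b => A a b - ∑ u ∈ Finset.Icc 1 (2 * r + 1),
      (t u : ℤ) * (Eth (2 * r + 1) r u a b - Eth (2 * r + 1) (r + 1) u a b)) LL =
      if FlagX.InO (2 * r + 1) (FlagX.Apr r A t) LL.1.1 LL.2.1 then 1 else 0 := fun t => rfl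
  simp only [he]
  by_cases hex : ∃ t : ℕ → ℕ, ((∀ u, t u ≠ 0 → u ∈ Finset.Icc 1 (2 * r + 1)) ∧
            (∑ u ∈ Finset.Icc 1 (2 * r + 1), t u = R) ∧
            (∀ u ∈ Finset.Icc 1 (2 * r + 1), (t u : ℤ) ≤ A r u)) ∧
      FlagX.InO (2 * r + 1) (FlagX.Apr r A t) LL.1.1 LL.2.1
  · obtain ⟨t, ht, hI⟩ := hex
    rw [finsum_eq_single _ t]
    · rw [if_pos ht, if_pos hI, mul_one,
        FlagX.card_flags halt hnondeg hr LL.1 LL.2 A C R hroco hCdiag t ht.1 ht.2.1 hI,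
        FlagX.count_final halt hnondeg hr LL.1.2 LL.2.2 A t ht.1 hI, FlagX.final_prod _ hq]
    · intro s hs
      by_cases h1 : (∀ u, s u ≠ 0 → u ∈ Finset.Icc 1 (2 * r + 1)) ∧
            (∑ u ∈ Finset.Icc 1 (2 * r + 1), s u = R) ∧
            (∀ u ∈ Finset.Icc 1 (2 * r + 1), (s u : ℤ) ≤ A r u)
      · rw [if_pos h1, if_neg, mul_zero]
        intro h2
        exact hs (FlagX.Apr_unique hr A s t h1.1 ht.1 h2 hI)
      · rw [if_neg h1]
  · rw [finsum_eq_zero_of_forall_eq_zero]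
    · haveI : IsEmpty {L' : Flags Φ (2 * r + 1) //
          FlagX.InO (2 * r + 1) C LL.1.1 L'.1 ∧ FlagX.InO (2 * r + 1) A L'.1 LL.2.1} := by
        refine ⟨fun L' => hex ?_⟩
        obtain ⟨t, h1, h2, _⟩ := FlagX.jumps halt hnondeg hr LL.1.2 L'.1.2 LL.2.2 A C R hCdiag
          L'.2.1 L'.2.2
        exact ⟨t, h1, h2⟩
      rw [Nat.card_of_isEmpty, Nat.cast_zero]
    · intro s
      by_cases h1 : (∀ u, s u ≠ 0 → u ∈ Finset.Icc 1 (2 * r + 1)) ∧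
            (∑ u ∈ Finset.Icc 1 (2 * r + 1), s u = R) ∧
            (∀ u ∈ Finset.Icc 1 (2 * r + 1), (s u : ℤ) ≤ A r u)
      · rw [if_pos h1, if_neg (fun h2 => hex ⟨s, h1, h2⟩), mul_zero]
      · rw [if_neg h1]
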